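/- (Theorem 28) Let 0 < θ₀ < θ₁ < 1, 0 < θ < 1, 0 < r, r₀, r₁, q₀, q₁ ≤ ∞, a, a₀, a₁, b₀, b₁ ∈ SV, ‖s^{-1/r₀} b₀(s)/a₀(s)‖_{r₀,(0,1)} < ∞, and ‖s^{-1/r₁} b₁(s)/a₁(s)‖_{r₁,(1,∞)} < ∞. Put c₀(t) = a₀(t) ‖s^{-1/r₀} b₀(s)/a₀(s)‖_{r₀,(0,t)}, c₁(t) = a₁(t) ‖s^{-1/r₁} b₁(s)/a₁(s)‖_{r₁,(t,∞)}, and ρ(t) = t^{θ₁-θ₀} c₀(t)/c₁(t). Then (Ā^𝓡_{θ₀,r₀,b₀,q₀,a₀}, Ā^𝓛_{θ₁,r₁,b₁,q₁,a₁})_{θ,r;a} ≅ Ā_{η,r;a^#}, where η = (1-θ)θ₀ + θθ₁ and a^#(t) = c₀(t)^{1-θ} c₁(t)^θ a(ρ(t)). -/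

import Mathlib

open MeasureTheory Set ENNReal Filter

noncomputable section

/-- The `L_q` quasi-norm (with respect to Lebesgue measure) of an `ℝ≥0∞`-valued
function over a set of reals; for `q = ∞` it is the essential supremum. -/
def LqNorm (q : ℝ≥0∞) (s : Set ℝ) (g : ℝ → ℝ≥0∞) : ℝ≥0∞ :=
  if q = ∞ then essSup g (volume.restrict s)
  else (∫⁻ t in s, g t ^ q.toReal) ^ q⁻¹.toReal

/-- The weight `s ↦ s ^ (-1/r) * b s`, as an `ℝ≥0∞`-valued function
(`1/∞ = 0` by convention). -/
def svWgt (r : ℝ≥0∞) (b : ℝ → ℝ) : ℝ → ℝ≥0∞ :=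
  fun s => ENNReal.ofReal (s ^ (-(r⁻¹.toReal)) * b s)

/-- `f` and `g` are equivalent on `s`: each is bounded by a constant multiple
of the other there. -/
def EquivOn (s : Set ℝ) (f g : ℝ → ℝ) : Prop :=
  ∃ C : ℝ, 0 < C ∧ ∀ t ∈ s, C⁻¹ * g t ≤ f t ∧ f t ≤ C * g t

/-- A positive measurable function `b` on `(0,∞)` is slowly varying if for every
`ε > 0`, `t ^ ε * b t` is equivalent to a non-decreasing function and
`t ^ (-ε) * b t` is equivalent to a non-increasing function. -/
def SlowlyVarying (b : ℝ → ℝ) : Prop :=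
  AEMeasurable b (volume.restrict (Ioi 0)) ∧ (∀ t ∈ Ioi (0:ℝ), 0 < b t) ∧
    ∀ ε : ℝ, 0 < ε →
      (∃ g : ℝ → ℝ, MonotoneOn g (Ioi 0) ∧ EquivOn (Ioi 0) (fun t => t ^ ε * b t) g) ∧
      (∃ g : ℝ → ℝ, AntitoneOn g (Ioi 0) ∧ EquivOn (Ioi 0) (fun t => t ^ (-ε) * b t) g)

/-- A quasi-Banach space continuously embedded into the ambient (Hausdorff) space `E`,
recorded via its extended-real-valued quasi-norm; the space itself is the set of
vectors of finite quasi-norm. -/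
structure QuasiBanach (E : Type*) [AddCommGroup E] [Module ℝ E] where
  N : E → ℝ≥0∞
  zero : N 0 = 0
  definite : ∀ x, N x = 0 → x = 0
  smul : ∀ (c : ℝ) (x : E), N (c • x) = ENNReal.ofReal |c| * N x
  quasi : ∃ C : ℝ≥0∞, 1 ≤ C ∧ C ≠ ∞ ∧ ∀ x y, N (x + y) ≤ C * (N x + N y)
  complete : ∀ f : ℕ → E,
    (∀ ε : ℝ≥0∞, 0 < ε → ∃ M : ℕ, ∀ m ≥ M, ∀ n ≥ M, N (f m - f n) < ε) →
    (∀ n, N (f n) ≠ ∞) →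
    ∃ g : E, N g ≠ ∞ ∧ Tendsto (fun n => N (f n - g)) atTop (nhds 0)

variable {E : Type*} [AddCommGroup E] [Module ℝ E]

/-- The Peetre K-functional of the couple whose quasi-norms are `N₀`, `N₁`. -/
def Kf (N₀ N₁ : E → ℝ≥0∞) (t : ℝ) (f : E) : ℝ≥0∞ :=
  ⨅ g : E, N₀ g + ENNReal.ofReal t * N₁ (f - g)

/-- The quasi-norm of the real interpolation space `Ā_{θ,q;b}`. -/
def normK (N₀ N₁ : E → ℝ≥0∞) (θ : ℝ) (q : ℝ≥0∞) (b : ℝ → ℝ) (f : E) : ℝ≥0∞ :=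
  LqNorm q (Ioi 0) fun u =>
    ENNReal.ofReal (u ^ (-θ - q⁻¹.toReal) * b u) * Kf N₀ N₁ u f

/-- The quasi-norm of the limiting interpolation space `Ā^𝓛_{σ,r,b,q,a}`. -/
def normL (N₀ N₁ : E → ℝ≥0∞) (σ : ℝ) (r q : ℝ≥0∞) (b a : ℝ → ℝ) (f : E) : ℝ≥0∞ :=
  LqNorm r (Ioi 0) fun t =>
    ENNReal.ofReal (t ^ (-(r⁻¹.toReal)) * (b t / a t)) *
      LqNorm q (Ioo 0 t) fun u =>
        ENNReal.ofReal (u ^ (-σ - q⁻¹.toReal) * a u) * Kf N₀ N₁ u f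

/-- The quasi-norm of the limiting interpolation space `Ā^𝓡_{σ,r,b,q,a}`. -/
def normR (N₀ N₁ : E → ℝ≥0∞) (σ : ℝ) (r q : ℝ≥0∞) (b a : ℝ → ℝ) (f : E) : ℝ≥0∞ :=
  LqNorm r (Ioi 0) fun t =>
    ENNReal.ofReal (t ^ (-(r⁻¹.toReal)) * (b t / a t)) *
      LqNorm q (Ioi t) fun u =>
        ENNReal.ofReal (u ^ (-σ - q⁻¹.toReal) * a u) * Kf N₀ N₁ u f

/-- Two (extended-real-valued) quasi-norms define the same space with
equivalent quasi-norms. -/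
def EquivNorms (nX nY : E → ℝ≥0∞) : Prop :=
  ∃ C : ℝ≥0∞, 0 < C ∧ C ≠ ∞ ∧ ∀ f : E, C⁻¹ * nY f ≤ nX f ∧ nX f ≤ C * nY f

/-!
Call a quasi-norm `N` intermediate with weight `W` if `W u * K(u, f) ≲ N f` for all `u` and `f`,
while `N f ≲ m * W u` as soon as `K(·, f)` is concentrated near `u` at height `m`, that is,
bounded by `m` times a suitable broken power of `s / u`. The spaces `Ā^𝓡_{θ₀,…}` and `Ā^𝓛_{θ₁,…}`
are intermediate with weights `u ^ (-θ₀) * c₀ u` and `u ^ (-θ₁) * c₁ u`, whose quotient is `ρ`.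

Let `K̃` be the functional of this pair. The lower bounds give `u ^ (-θ₀) * c₀ u * K(u, f) ≲
K̃(ρ u, f)`. Conversely, when `K(·, f)` is concentrated near `u`, so are the `K`-functionals of both
parts of a nearly optimal splitting of `f` at `u`, which bounds `K̃(ρ u, f)`. For general `f` the
height is taken from the supremum over `s` of `K(s, f)` weighted by a broken power of `s / u`, and
a convolution inequality shows that passing to this supremum does not increase the norm of
`Ā_{η,r;a^#}`. What remains is the substitution `t = ρ u`; as `ρ` varies regularly with positive
index but need be neither monotone nor continuous, it is carried out on dyadic points.
-/

variable {G : Type*} [AddCommGroup G]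

section BrokenPow

/-- The broken power law equal to `x ^ α` on `(0, 1]` and to `x ^ β` on `(1, ∞)`. For `α ≤ β` it is
the maximum of the two powers and measures two-sided growth; for `β ≤ α` it is their minimum, a
profile peaking at `1`. -/
def brokenPow (α β x : ℝ) : ℝ≥0∞ :=
  ENNReal.ofReal x ^ (if x ≤ 1 then α else β)

variable {α β α' β' x y : ℝ}

lemma brokenPow_ne_top (hx : 0 < x) : brokenPow α β x ≠ ∞ :=
  ENNReal.rpow_ne_top_of_ne_zero (by simpa) ofReal_ne_top

lemma brokenPow_ne_zero (hx : 0 < x) : brokenPow α β x ≠ 0 :=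
  (ENNReal.rpow_pos (by simpa) ofReal_ne_top).ne'

lemma brokenPow_one : brokenPow α β 1 = 1 := by simp [brokenPow]

lemma brokenPow_self : brokenPow α α x = ENNReal.ofReal x ^ α := by simp [brokenPow]

lemma brokenPow_of_le (hx : x ≤ 1) : brokenPow α β x = ENNReal.ofReal x ^ α := by
  rw [brokenPow, if_pos hx]

lemma brokenPow_of_ge (hx : 1 ≤ x) : brokenPow α β x = ENNReal.ofReal x ^ β := by
  rcases hx.eq_or_lt with rfl | hx
  · simp [brokenPow]
  · rw [brokenPow, if_neg hx.not_ge]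

lemma brokenPow_mul (hx : 0 < x) :
    brokenPow α β x * brokenPow α' β' x = brokenPow (α + α') (β + β') x := by
  unfold brokenPow
  split_ifs <;> rw [ENNReal.rpow_add _ _ (by simpa) ofReal_ne_top]

lemma brokenPow_inv (hx : 0 < x) : brokenPow α β x⁻¹ = brokenPow (-β) (-α) x := by
  rcases le_total x 1 with h | h
  · rw [brokenPow_of_ge ((one_le_inv₀ hx).2 h), brokenPow_of_le h, ENNReal.ofReal_inv_of_pos hx,
      ENNReal.inv_rpow, ENNReal.rpow_neg]
  · rw [brokenPow_of_le (inv_le_one_of_one_le₀ h), brokenPow_of_ge h, ENNReal.ofReal_inv_of_pos hx,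
      ENNReal.inv_rpow, ENNReal.rpow_neg]

lemma brokenPow_rpow (γ : ℝ) : brokenPow α β x ^ γ = brokenPow (α * γ) (β * γ) x := by
  unfold brokenPow
  split_ifs <;> rw [ENNReal.rpow_mul]

lemma brokenPow_mono (hα : α' ≤ α) (hβ : β ≤ β') : brokenPow α β x ≤ brokenPow α' β' x := by
  unfold brokenPow
  split_ifs with h
  · exact ENNReal.rpow_le_rpow_of_exponent_ge (by simpa) hα
  · exact ENNReal.rpow_le_rpow_of_exponent_le (by simpa using (not_le.1 h).le) hβ

lemma brokenPow_eq_max (hαβ : α ≤ β) :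
    brokenPow α β x = max (ENNReal.ofReal x ^ α) (ENNReal.ofReal x ^ β) := by
  refine le_antisymm ?_ (max_le ?_ ?_)
  · unfold brokenPow
    split_ifs <;> simp
  · exact brokenPow_self.symm.trans_le (brokenPow_mono le_rfl hαβ)
  · exact brokenPow_self.symm.trans_le (brokenPow_mono hαβ le_rfl)

lemma brokenPow_mul_le (hαβ : α ≤ β) (hx : 0 < x) :
    brokenPow α β (x * y) ≤ brokenPow α β x * brokenPow α β y := by
  simp only [brokenPow_eq_max hαβ, ENNReal.ofReal_mul hx.le]
  rw [ENNReal.mul_rpow_of_ne_top ofReal_ne_top ofReal_ne_top,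
    ENNReal.mul_rpow_of_ne_top ofReal_ne_top ofReal_ne_top]
  exact max_le (mul_le_mul' (le_max_left _ _) (le_max_left _ _))
    (mul_le_mul' (le_max_right _ _) (le_max_right _ _))

end BrokenPow

section PowerGrowth

/-- `F` grows at most like the broken power law `brokenPow α β` between any two points of
`(0, ∞)`, with constant `C`. The constant is explicit because estimates below are uniform over
families of functions. -/
def PowerGrowth (C : ℝ≥0∞) (α β : ℝ) (F : ℝ → ℝ≥0∞) : Prop :=
  ∀ ⦃s u : ℝ⦄, 0 < s → 0 < u → F s ≤ C * brokenPow α β (s / u) * F u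

/-- A weight on `(0, ∞)` which varies regularly with index `η`, in the weak sense that it grows like
`t ^ η` up to constants and arbitrarily small powers. Index `0` is slow variation. -/
structure RegularlyVarying (η : ℝ) (w : ℝ → ℝ≥0∞) : Prop where
  ne_zero : ∀ t, 0 < t → w t ≠ 0
  ne_top : ∀ t, 0 < t → w t ≠ ∞
  growth : ∀ ε, 0 < ε → ∃ C, C ≠ ∞ ∧ PowerGrowth C (η - ε) (η + ε) w

variable {C C' : ℝ≥0∞} {α β α' β' η η' : ℝ} {F H : ℝ → ℝ≥0∞}

lemma PowerGrowth.mono (hF : PowerGrowth C α β F) (hα : α' ≤ α) (hβ : β ≤ β') :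
    PowerGrowth C α' β' F := fun s u hs hu =>
  (hF hs hu).trans (by gcongr; exact brokenPow_mono hα hβ)

lemma PowerGrowth.mul (hF : PowerGrowth C α β F) (hH : PowerGrowth C' α' β' H) :
    PowerGrowth (C * C') (α + α') (β + β') fun s => F s * H s := fun s u hs hu =>
  (mul_le_mul' (hF hs hu) (hH hs hu)).trans_eq (by rw [← brokenPow_mul (div_pos hs hu)]; ring)

lemma PowerGrowth.rpow (hF : PowerGrowth C α β F) {γ : ℝ} (hγ : 0 ≤ γ) :
    PowerGrowth (C ^ γ) (α * γ) (β * γ) fun s => F s ^ γ := fun s u hs hu =>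
  (ENNReal.rpow_le_rpow (hF hs hu) hγ).trans_eq (by
    rw [ENNReal.mul_rpow_of_nonneg _ _ hγ, ENNReal.mul_rpow_of_nonneg _ _ hγ, brokenPow_rpow])

lemma PowerGrowth.inv (hF : PowerGrowth C α β F) (hC : C ≠ 0 ∧ C ≠ ∞) :
    PowerGrowth C (-β) (-α) fun s => (F s)⁻¹ := by
  intro s u hs hu
  have hP : brokenPow α β (u / s) ≠ 0 ∧ brokenPow α β (u / s) ≠ ∞ :=
    ⟨brokenPow_ne_zero (div_pos hu hs), brokenPow_ne_top (div_pos hu hs)⟩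
  rw [← brokenPow_inv (div_pos hs hu), inv_div]
  calc (F s)⁻¹ = (C * brokenPow α β (u / s)) * (C * brokenPow α β (u / s) * F s)⁻¹ := by
        rw [ENNReal.mul_inv (.inl (mul_ne_zero hC.1 hP.1)) (.inl (ENNReal.mul_ne_top hC.2 hP.2)),
          ENNReal.mul_inv_cancel_left (mul_ne_zero hC.1 hP.1) (ENNReal.mul_ne_top hC.2 hP.2)]
    _ ≤ C * brokenPow α β (u / s) * (F u)⁻¹ := by
        gcongr
        exact hF hu hs

lemma PowerGrowth.comp_inv (hF : PowerGrowth C α β F) :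
    PowerGrowth C (-β) (-α) fun s => F s⁻¹ := fun s u hs hu => by
  simpa only [inv_div_inv, ← brokenPow_inv (div_pos hs hu), inv_div] using
    hF (inv_pos.2 hs) (inv_pos.2 hu)

lemma powerGrowth_rpow (γ : ℝ) : PowerGrowth 1 γ γ fun s => ENNReal.ofReal s ^ γ := by
  intro s u hs hu
  rw [one_mul, brokenPow_self, ← ENNReal.mul_rpow_of_ne_top ofReal_ne_top ofReal_ne_top,
    ← ENNReal.ofReal_mul (by positivity), div_mul_cancel₀ _ hu.ne']

lemma RegularlyVarying.growth' (hF : RegularlyVarying η F) (hα : α < η) (hβ : η < β) :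
    ∃ C, C ≠ ∞ ∧ PowerGrowth C α β F := by
  obtain ⟨C, hC, h⟩ := hF.growth (min (η - α) (β - η)) (lt_min (by linarith) (by linarith))
  exact ⟨C, hC, h.mono (by linarith [min_le_left (η - α) (β - η)])
    (by linarith [min_le_right (η - α) (β - η)])⟩

lemma regularlyVarying_rpow (γ : ℝ) : RegularlyVarying γ fun s => ENNReal.ofReal s ^ γ where
  ne_zero t ht := (ENNReal.rpow_pos (by simpa) ofReal_ne_top).ne'
  ne_top t ht := ENNReal.rpow_ne_top_of_ne_zero (by simpa) ofReal_ne_top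
  growth ε hε := ⟨1, one_ne_top, (powerGrowth_rpow γ).mono (by linarith) (by linarith)⟩

lemma RegularlyVarying.mul (hF : RegularlyVarying η F) (hH : RegularlyVarying η' H) :
    RegularlyVarying (η + η') fun s => F s * H s where
  ne_zero t ht := mul_ne_zero (hF.ne_zero t ht) (hH.ne_zero t ht)
  ne_top t ht := ENNReal.mul_ne_top (hF.ne_top t ht) (hH.ne_top t ht)
  growth ε hε := by
    obtain ⟨C, hC, h⟩ := hF.growth (ε / 2) (half_pos hε)
    obtain ⟨C', hC', h'⟩ := hH.growth (ε / 2) (half_pos hε)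
    exact ⟨C * C', ENNReal.mul_ne_top hC hC', (h.mul h').mono (by linarith) (by linarith)⟩

lemma RegularlyVarying.rpow (hF : RegularlyVarying η F) {γ : ℝ} (hγ : 0 < γ) :
    RegularlyVarying (η * γ) fun s => F s ^ γ where
  ne_zero t ht := (ENNReal.rpow_pos (pos_iff_ne_zero.2 (hF.ne_zero t ht)) (hF.ne_top t ht)).ne'
  ne_top t ht := ENNReal.rpow_ne_top_of_nonneg hγ.le (hF.ne_top t ht)
  growth ε hε := by
    obtain ⟨C, hC, h⟩ := hF.growth (ε / γ) (div_pos hε hγ)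
    refine ⟨C ^ γ, ENNReal.rpow_ne_top_of_nonneg hγ.le hC, ?_⟩
    simpa only [sub_mul, add_mul, div_mul_cancel₀ _ hγ.ne'] using h.rpow hγ.le

lemma RegularlyVarying.inv (hF : RegularlyVarying η F) :
    RegularlyVarying (-η) fun s => (F s)⁻¹ where
  ne_zero t ht := ENNReal.inv_ne_zero.2 (hF.ne_top t ht)
  ne_top t ht := ENNReal.inv_ne_top.2 (hF.ne_zero t ht)
  growth ε hε := by
    obtain ⟨C, hC, h⟩ := hF.growth ε hε
    have hC0 : C ≠ 0 := by
      rintro rfl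
      exact hF.ne_zero 1 one_pos (by simpa using h one_pos one_pos)
    exact ⟨C, hC, (h.inv ⟨hC0, hC⟩).mono (by linarith) (by linarith)⟩

lemma RegularlyVarying.comp_inv (hF : RegularlyVarying η F) :
    RegularlyVarying (-η) fun s => F s⁻¹ where
  ne_zero t ht := hF.ne_zero _ (inv_pos.2 ht)
  ne_top t ht := hF.ne_top _ (inv_pos.2 ht)
  growth ε hε := by
    obtain ⟨C, hC, h⟩ := hF.growth ε hε
    exact ⟨C, hC, h.comp_inv.mono (by linarith) (by linarith)⟩

lemma RegularlyVarying.pos {ρ : ℝ → ℝ}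
    (hρ : RegularlyVarying η fun u => ENNReal.ofReal (ρ u)) {u : ℝ} (hu : 0 < u) : 0 < ρ u := by
  simpa [pos_iff_ne_zero] using hρ.ne_zero u hu

lemma PowerGrowth.le_of_abs_logb_sub_le (hF : PowerGrowth C α β F) {s u M : ℝ} (hs : 0 < s)
    (hu : 0 < u) (h : |Real.logb 2 s - Real.logb 2 u| ≤ M) :
    F s ≤ C * ENNReal.ofReal 2 ^ ((|α| + |β|) * M) * F u := by
  have hpow : brokenPow α β (s / u) ≤ ENNReal.ofReal 2 ^ ((|α| + |β|) * M) := by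
    have hle : ∀ γ : ℝ, |γ| ≤ |α| + |β| →
        ENNReal.ofReal (s / u) ^ γ ≤ ENNReal.ofReal 2 ^ ((|α| + |β|) * M) := fun γ hγ => by
      rw [← Real.rpow_logb two_pos (by norm_num) (div_pos hs hu),
        ← ENNReal.ofReal_rpow_of_pos two_pos, ← ENNReal.rpow_mul, Real.logb_div hs.ne' hu.ne']
      refine ENNReal.rpow_le_rpow_of_exponent_le (by simp) ?_
      calc _ ≤ |Real.logb 2 s - Real.logb 2 u| * |γ| := (le_abs_self _).trans_eq (abs_mul _ _)
        _ ≤ M * (|α| + |β|) := mul_le_mul h hγ (abs_nonneg _) ((abs_nonneg _).trans h)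
        _ = (|α| + |β|) * M := mul_comm _ _
    unfold brokenPow
    split_ifs
    exacts [hle α (by simp), hle β (by simp)]
  exact (hF hs hu).trans (by gcongr)

lemma brokenPow_neg_self_le {B : ℝ≥0∞} {y : ℝ} (hα : 0 ≤ α) (hy : 0 < y)
    (h : ENNReal.ofReal y ≤ B) (hinv : ENNReal.ofReal y⁻¹ ≤ B) : brokenPow (-α) α y ≤ B ^ α := by
  rw [brokenPow_eq_max (by linarith), ENNReal.rpow_neg, ← ENNReal.inv_rpow,
    ← ENNReal.ofReal_inv_of_pos hy]
  exact max_le (by gcongr) (by gcongr)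

lemma RegularlyVarying.comp (hF : RegularlyVarying 0 F) {ρ : ℝ → ℝ}
    (hρ : RegularlyVarying η fun u => ENNReal.ofReal (ρ u)) :
    RegularlyVarying 0 fun s => F (ρ s) := by
  have hpos : ∀ t, 0 < t → 0 < ρ t := fun t ht => hρ.pos ht
  refine ⟨fun t ht => hF.ne_zero _ (hpos t ht), fun t ht => hF.ne_top _ (hpos t ht), fun ε hε => ?_⟩
  set κ := |η| + 1
  have hκ : 0 < κ := by positivity
  obtain ⟨A, hA, hρ⟩ := hρ.growth' (α := -κ) (β := κ) (by linarith [neg_abs_le η])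
    (by linarith [le_abs_self η])
  obtain ⟨C, hC, hF⟩ := hF.growth (ε / κ) (by positivity)
  refine ⟨C * A ^ (ε / κ), by finiteness, fun s u hs hu => ?_⟩
  have ratio : ∀ {s u}, 0 < s → 0 < u →
      ENNReal.ofReal (ρ s / ρ u) ≤ A * brokenPow (-κ) κ (s / u) := fun {s u} hs hu => by
    rw [ENNReal.ofReal_div_of_pos (hpos u hu)]
    exact ENNReal.div_le_of_le_mul (hρ hs hu)
  have hinv : ENNReal.ofReal (ρ s / ρ u)⁻¹ ≤ A * brokenPow (-κ) κ (s / u) := by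
    rw [← neg_neg κ, ← brokenPow_inv (div_pos hs hu), neg_neg, inv_div, inv_div]
    exact ratio hu hs
  calc F (ρ s) ≤ C * brokenPow (0 - ε / κ) (0 + ε / κ) (ρ s / ρ u) * F (ρ u) :=
        hF (hpos s hs) (hpos u hu)
    _ ≤ C * (A * brokenPow (-κ) κ (s / u)) ^ (ε / κ) * F (ρ u) := by
        rw [zero_sub, zero_add]
        gcongr
        exact brokenPow_neg_self_le (by positivity) (div_pos (hpos s hs) (hpos u hu))
          (ratio hs hu) hinv
    _ = C * A ^ (ε / κ) * brokenPow (0 - ε) (0 + ε) (s / u) * F (ρ u) := by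
        rw [ENNReal.mul_rpow_of_nonneg _ _ (by positivity), brokenPow_rpow, neg_mul,
          mul_div_cancel₀ _ hκ.ne', zero_sub, zero_add]
        ring

end PowerGrowth

section MultiplicativeMeasure

/-- The dilation-invariant measure `du / u` on `(0, ∞)`, as the image of Lebesgue measure under
`exp`. It absorbs the factors `u ^ (-1 / q)` in the quasi-norms of the statement. -/
def dlog : Measure ℝ :=
  volume.map Real.exp

lemma dlog_eq_withDensity :
    dlog = (volume.restrict (Ioi 0)).withDensity fun u => ENNReal.ofReal u⁻¹ := by
  ext s hs
  have hpre : MeasurableSet (Real.exp ⁻¹' s) := Real.measurable_exp hs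
  have himage : Real.exp '' (Real.exp ⁻¹' s) = s ∩ Ioi 0 := by
    rw [image_preimage_eq_inter_range, Real.range_exp]
  rw [withDensity_apply _ hs, Measure.restrict_restrict hs, ← himage,
    lintegral_image_eq_lintegral_abs_deriv_mul hpre
      (fun x _ => (Real.hasDerivAt_exp x).hasDerivWithinAt) Real.exp_injective.injOn, dlog,
    Measure.map_apply Real.measurable_exp hs, ← setLIntegral_one]
  refine lintegral_congr fun x => ?_
  rw [Real.abs_exp, ← ENNReal.ofReal_mul (Real.exp_pos x).le, mul_inv_cancel₀ (Real.exp_ne_zero x),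
    ENNReal.ofReal_one]

lemma ae_dlog_restrict_eq {S : Set ℝ} (hS : MeasurableSet S) (hS0 : S ⊆ Ioi 0) :
    ae (dlog.restrict S) = ae (volume.restrict S) := by
  have hdens : AEMeasurable (fun u : ℝ => ENNReal.ofReal u⁻¹) (volume.restrict S) := by fun_prop
  rw [dlog_eq_withDensity, restrict_withDensity hS, Measure.restrict_restrict hS,
    inter_eq_left.2 hS0]
  refine le_antisymm (withDensity_absolutelyContinuous _ _).ae_le
    (withDensity_absolutelyContinuous' hdens ?_).ae_le
  filter_upwards [ae_restrict_mem hS] with u hu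
  simpa using hS0 hu

lemma lqNorm_eq_eLpNorm {q : ℝ≥0∞} (hq : q ≠ 0) {S : Set ℝ} (hS : MeasurableSet S)
    (hS0 : S ⊆ Ioi 0) {F H : ℝ → ℝ≥0∞}
    (hFH : ∀ u ∈ S, F u = ENNReal.ofReal (u ^ (-q⁻¹.toReal)) * H u) :
    LqNorm q S F = eLpNorm H q (dlog.restrict S) := by
  rcases eq_or_ne q ∞ with rfl | hq'
  · have hae : F =ᵐ[volume.restrict S] H := by
      filter_upwards [ae_restrict_mem hS] with u hu
      simpa using hFH u hu
    rw [LqNorm, if_pos rfl, essSup_congr_ae hae]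
    simp [eLpNormEssSup, essSup, ae_dlog_restrict_eq hS hS0]
  have hq0 : 0 < q.toReal := ENNReal.toReal_pos hq hq'
  rw [LqNorm, if_neg hq', eLpNorm_eq_lintegral_rpow_enorm_toReal hq hq', dlog_eq_withDensity,
    restrict_withDensity hS, Measure.restrict_restrict hS, inter_eq_left.2 hS0,
    lintegral_withDensity_eq_lintegral_mul_non_measurable _ (by fun_prop) (by simp)]
  rw [one_div, ENNReal.toReal_inv]
  congr 1
  refine setLIntegral_congr_fun hS fun u hu => ?_
  have hu0 : 0 < u := hS0 hu
  rw [hFH u hu, ENNReal.mul_rpow_of_nonneg _ _ hq0.le, ENNReal.ofReal_rpow_of_pos (by positivity),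
    ← Real.rpow_mul hu0.le, ENNReal.toReal_inv, neg_mul, inv_mul_cancel₀ hq0.ne',
    Real.rpow_neg_one]
  rfl

lemma dlog_restrict_Ioi : dlog.restrict (Ioi 0) = dlog := by
  rw [dlog_eq_withDensity, restrict_withDensity measurableSet_Ioi,
    Measure.restrict_restrict measurableSet_Ioi, inter_self]

lemma dlog_map_inv : dlog.map (·⁻¹) = dlog := by
  have hcomp : (fun u : ℝ => u⁻¹) ∘ Real.exp = Real.exp ∘ Neg.neg :=
    funext fun x => (Real.exp_neg x).symm
  rw [dlog, Measure.map_map measurable_inv Real.measurable_exp, hcomp,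
    ← Measure.map_map Real.measurable_exp measurable_neg, Measure.map_neg_eq_self]

lemma dlog_map_mul_left {c : ℝ} (hc : 0 < c) : dlog.map (c * ·) = dlog := by
  have hcomp : (fun u : ℝ => c * u) ∘ Real.exp = Real.exp ∘ fun x => Real.log c + x :=
    funext fun x => by simp [Real.exp_add, Real.exp_log hc]
  rw [dlog, Measure.map_map (measurable_const_mul c) Real.measurable_exp, hcomp,
    ← Measure.map_map Real.measurable_exp (measurable_const_add _), map_add_left_eq_self]

lemma dlog_Ico {a b : ℝ} (ha : 0 < a) (hab : a ≤ b) :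
    dlog (Ico a b) = ENNReal.ofReal (Real.log (b / a)) := by
  have hpre : Real.exp ⁻¹' Ico a b = Ico (Real.log a) (Real.log b) := by
    ext x
    simp [Real.log_le_iff_le_exp ha, Real.lt_log_iff_exp_lt (ha.trans_le hab)]
  rw [dlog, Measure.map_apply Real.measurable_exp measurableSet_Ico, hpre, Real.volume_Ico,
    Real.log_div (ha.trans_le hab).ne' ha.ne']

lemma floor_logb_two_eq_iff {u : ℝ} (hu : 0 < u) {k : ℤ} :
    ⌊Real.logb 2 u⌋ = k ↔ u ∈ Ico ((2 : ℝ) ^ k) (2 ^ (k + 1)) := by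
  rw [Int.floor_eq_iff, Real.le_logb_iff_rpow_le one_lt_two hu,
    Real.logb_lt_iff_lt_rpow one_lt_two hu, mem_Ico]
  norm_cast

lemma measurable_floor_logb_two : Measurable fun u : ℝ => ⌊Real.logb 2 u⌋ :=
  (Real.measurable_log.div_const _).floor

lemma dlog_map_floor_logb_two :
    dlog.map (fun u => ⌊Real.logb 2 u⌋) = ENNReal.ofReal (Real.log 2) • Measure.count := by
  refine Measure.ext_of_singleton fun k => ?_
  have hpre : (fun u => ⌊Real.logb 2 u⌋) ⁻¹' {k} ∩ Ioi 0 = Ico ((2 : ℝ) ^ k) (2 ^ (k + 1)) := by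
    ext u
    refine ⟨fun ⟨h, hu⟩ => (floor_logb_two_eq_iff hu).1 h, fun h => ?_⟩
    have hu : 0 < u := lt_of_lt_of_le (by positivity) h.1
    exact ⟨(floor_logb_two_eq_iff hu).2 h, hu⟩
  have hratio : (2 : ℝ) ^ (k + 1) / 2 ^ k = 2 := by
    rw [zpow_add_one₀ two_ne_zero, mul_div_cancel_left₀ _ (by positivity)]
  have hfibre := measurable_floor_logb_two (measurableSet_singleton k)
  rw [Measure.map_apply measurable_floor_logb_two (measurableSet_singleton k), ← dlog_restrict_Ioi,
    Measure.restrict_apply hfibre, hpre,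
    dlog_Ico (by positivity) (zpow_le_zpow_right₀ one_le_two (by lia)), hratio]
  simp

end MultiplicativeMeasure

section NormTools

variable {α : Type*} {mα : MeasurableSpace α} {μ ν : Measure α} {q c : ℝ≥0∞} {F H : α → ℝ≥0∞}

lemma eLpNorm_le_const_mul_of_ae_le (hc : c ≠ ∞) (h : ∀ᵐ x ∂μ, F x ≤ c * H x) :
    eLpNorm F q μ ≤ c * eLpNorm H q μ := by
  lift c to NNReal using hc
  exact eLpNorm_le_mul_eLpNorm_of_ae_le_mul' (by simpa using h) q

lemma eLpNorm_const_mul (hc : c ≠ ∞) : eLpNorm (fun x => c * F x) q μ = c * eLpNorm F q μ := by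
  refine le_antisymm (eLpNorm_le_const_mul_of_ae_le hc (.of_forall fun x => le_rfl)) ?_
  rcases eq_or_ne c 0 with rfl | hc0
  · simp
  have hcF : eLpNorm F q μ ≤ c⁻¹ * eLpNorm (fun x => c * F x) q μ :=
    eLpNorm_le_const_mul_of_ae_le (ENNReal.inv_ne_top.2 hc0) (.of_forall fun x => by
      rw [ENNReal.inv_mul_cancel_left hc0 hc])
  exact (mul_le_mul_right hcF c).trans_eq (ENNReal.mul_inv_cancel_left hc0 hc)

lemma mul_eLpNorm_le (c : ℝ≥0∞) : c * eLpNorm F q μ ≤ eLpNorm (fun x => c * F x) q μ := by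
  refine ENNReal.mul_le_of_forall_lt fun a ha b hb => ?_
  calc a * b ≤ a * eLpNorm F q μ := by gcongr
    _ = eLpNorm (fun x => a * F x) q μ := (eLpNorm_const_mul ha.ne_top).symm
    _ ≤ eLpNorm (fun x => c * F x) q μ := eLpNorm_mono_enorm fun x => by
        simp only [enorm_eq_self]
        gcongr

lemma eLpNorm_add_measure_le :
    eLpNorm F q (μ + ν) ≤ 2 ^ q⁻¹.toReal * (eLpNorm F q μ + eLpNorm F q ν) := by
  rcases eq_or_ne q 0 with rfl | hq
  · simp
  rcases eq_or_ne q ∞ with rfl | hq'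
  · suffices h : F ≤ᵐ[μ + ν] fun _ => essSup F μ + essSup F ν by
      simpa [eLpNormEssSup] using essSup_le_of_ae_le _ h
    exact ae_add_measure_iff.2
      ⟨(ae_le_essSup F).mono fun x hx => le_add_right hx,
        (ae_le_essSup F).mono fun x hx => le_add_left hx⟩
  have hq0 : 0 ≤ q⁻¹.toReal := ENNReal.toReal_nonneg
  simp only [eLpNorm_eq_lintegral_rpow_enorm_toReal hq hq', lintegral_add_measure, enorm_eq_self,
    one_div, ← ENNReal.toReal_inv]
  set A := ∫⁻ x, F x ^ q.toReal ∂μ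
  set B := ∫⁻ x, F x ^ q.toReal ∂ν
  calc (A + B) ^ q⁻¹.toReal ≤ (2 * max A B) ^ q⁻¹.toReal := by
        rw [two_mul]
        gcongr
        exacts [le_max_left _ _, le_max_right _ _]
    _ = 2 ^ q⁻¹.toReal * max (A ^ q⁻¹.toReal) (B ^ q⁻¹.toReal) := by
        rw [ENNReal.mul_rpow_of_nonneg _ _ hq0, (ENNReal.monotone_rpow_of_nonneg hq0).map_max]
    _ ≤ 2 ^ q⁻¹.toReal * (A ^ q⁻¹.toReal + B ^ q⁻¹.toReal) := by
        gcongr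
        exact max_le_add_of_nonneg zero_le zero_le

lemma eLpNorm_restrict_union_le (s t : Set α) :
    eLpNorm F q (μ.restrict (s ∪ t)) ≤
      2 ^ q⁻¹.toReal * (eLpNorm F q (μ.restrict s) + eLpNorm F q (μ.restrict t)) :=
  (eLpNorm_mono_measure F (Measure.restrict_union_le s t)).trans eLpNorm_add_measure_le

end NormTools

section HeadTailNorms

/-- The `L_q(du / u)` quasi-norm over `(0, t)`. -/
def headNorm (q : ℝ≥0∞) (F : ℝ → ℝ≥0∞) (t : ℝ) : ℝ≥0∞ :=
  eLpNorm F q (dlog.restrict (Ioo 0 t))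

/-- The `L_q(du / u)` quasi-norm over `(t, ∞)`. -/
def tailNorm (q : ℝ≥0∞) (F : ℝ → ℝ≥0∞) (t : ℝ) : ℝ≥0∞ :=
  eLpNorm F q (dlog.restrict (Ioi t))

variable {q C : ℝ≥0∞} {α β t u : ℝ} {F H : ℝ → ℝ≥0∞}

instance : NullSingletonClass dlog := by
  rw [dlog_eq_withDensity]
  infer_instance

lemma ae_dlog_pos : ∀ᵐ u ∂dlog, 0 < u := by
  rw [← dlog_restrict_Ioi]
  exact ae_restrict_mem measurableSet_Ioi

lemma eLpNorm_dlog_comp_inv (q : ℝ≥0∞) (F : ℝ → ℝ≥0∞) (S : Set ℝ) :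
    eLpNorm (fun u => F u⁻¹) q (dlog.restrict (Inv.inv ⁻¹' S)) = eLpNorm F q (dlog.restrict S) := by
  have hinv : MeasurableEmbedding (Inv.inv : ℝ → ℝ) := (MeasurableEquiv.inv ℝ).measurableEmbedding
  conv_rhs => rw [← dlog_map_inv, hinv.restrict_map, hinv.eLpNorm_map_measure]
  rfl

lemma headNorm_comp_inv (ht : 0 < t) : headNorm q (fun u => F u⁻¹) t = tailNorm q F t⁻¹ := by
  rw [headNorm, tailNorm, ← eLpNorm_dlog_comp_inv q F (Ioi t⁻¹), inv_preimage,
    inv_Ioi₀ (inv_pos.2 ht), inv_inv]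

lemma tailNorm_comp_inv (ht : 0 < t) : tailNorm q (fun u => F u⁻¹) t = headNorm q F t⁻¹ := by
  have h := headNorm_comp_inv (q := q) (F := fun u => F u⁻¹) (inv_pos.2 ht)
  simpa only [inv_inv, eq_comm] using h

lemma tailNorm_eq_headNorm (ht : 0 < t) : tailNorm q F t = headNorm q (fun u => F u⁻¹) t⁻¹ := by
  rw [headNorm_comp_inv (inv_pos.2 ht), inv_inv]

lemma headNorm_mul_left {c : ℝ} (hc : 0 < c) :
    headNorm q F (c * t) = headNorm q (fun u => F (c * u)) t := by
  have hmul : MeasurableEmbedding (c * · : ℝ → ℝ) := measurableEmbedding_mulLeft₀ hc.ne'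
  have hpre : (c * · : ℝ → ℝ) ⁻¹' Ioo 0 (c * t) = Ioo 0 t := by
    rw [preimage_const_mul_Ioo₀ _ _ hc, zero_div, mul_div_cancel_left₀ _ hc.ne']
  rw [headNorm, ← dlog_map_mul_left hc, hmul.restrict_map, hmul.eLpNorm_map_measure, hpre]
  rfl

lemma tailNorm_anti_right {t u : ℝ} (htu : t ≤ u) : tailNorm q F u ≤ tailNorm q F t :=
  eLpNorm_mono_measure F (Measure.restrict_mono (Ioi_subset_Ioi htu) le_rfl)

lemma headNorm_le_const_mul (hC : C ≠ ∞) (h : ∀ u, 0 < u → u < t → F u ≤ C * H u) :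
    headNorm q F t ≤ C * headNorm q H t := by
  refine eLpNorm_le_const_mul_of_ae_le hC ?_
  filter_upwards [ae_restrict_mem measurableSet_Ioo] with u hu using h u hu.1 hu.2

lemma tailNorm_le_const_mul (hC : C ≠ ∞) (h : ∀ u, t < u → F u ≤ C * H u) :
    tailNorm q F t ≤ C * tailNorm q H t := by
  refine eLpNorm_le_const_mul_of_ae_le hC ?_
  filter_upwards [ae_restrict_mem measurableSet_Ioi] with u hu using h u hu

lemma eLpNorm_dlog_le_headNorm_add_tailNorm (ht : 0 < t) :
    eLpNorm F q dlog ≤ 2 ^ q⁻¹.toReal * (headNorm q F t + tailNorm q F t) := by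
  rw [← dlog_restrict_Ioi, ← Ioo_union_Ici_eq_Ioi ht, tailNorm,
    Measure.restrict_congr_set Ioi_ae_eq_Ici]
  exact eLpNorm_restrict_union_le _ _

lemma headNorm_rpow_one_ne_top (hα : 0 < α) :
    headNorm q (fun u => ENNReal.ofReal u ^ α) 1 ≠ ∞ := by
  rcases eq_or_ne q 0 with rfl | hq
  · simp [headNorm]
  rcases eq_or_ne q ∞ with rfl | hq'
  · refine ne_top_of_le_ne_top one_ne_top ?_
    rw [headNorm, eLpNorm_exponent_top, eLpNormEssSup]
    refine essSup_le_of_ae_le _ ?_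
    filter_upwards [ae_restrict_mem measurableSet_Ioo] with u hu
    exact ENNReal.rpow_le_one (ENNReal.ofReal_le_one.2 hu.2.le) hα.le
  have hq0 : 0 < q.toReal := ENNReal.toReal_pos hq hq'
  have hint : IntegrableOn (fun u : ℝ => u ^ (α * q.toReal - 1)) (Ioo 0 1) :=
    (intervalIntegral.integrableOn_Ioo_rpow_iff one_pos).2 (by nlinarith)
  rw [headNorm, ← lqNorm_eq_eLpNorm hq measurableSet_Ioo Ioo_subset_Ioi_self fun _ _ => rfl,
    LqNorm, if_neg hq']
  refine ENNReal.rpow_ne_top_of_nonneg ENNReal.toReal_nonneg ?_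
  refine ne_of_eq_of_ne (setLIntegral_congr_fun measurableSet_Ioo fun u hu => ?_)
    hint.lintegral_lt_top.ne
  have hu : 0 < u := hu.1
  rw [ENNReal.ofReal_rpow_of_pos hu, ← ENNReal.ofReal_mul (by positivity), ← Real.rpow_add hu,
    ENNReal.ofReal_rpow_of_pos (by positivity), ← Real.rpow_mul hu.le, ENNReal.toReal_inv, add_mul,
    neg_mul, inv_mul_cancel₀ hq0.ne', neg_add_eq_sub]

lemma PowerGrowth.headNorm (hF : PowerGrowth C α β F) (hC : C ≠ ∞) :
    PowerGrowth C α β (headNorm q F) := by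
  intro s u hs hu
  have hsu := div_pos hs hu
  rw [← div_mul_cancel₀ s hu.ne', headNorm_mul_left hsu, div_mul_cancel₀ s hu.ne']
  refine headNorm_le_const_mul (by finiteness [brokenPow_ne_top (α := α) (β := β) hsu])
    fun v hv _ => ?_
  simpa [mul_div_cancel_right₀ _ hv.ne'] using hF (mul_pos hsu hv) hv

lemma exists_le_headNorm (hq : q ≠ 0) (hC : C ≠ ∞) :
    ∃ C', C' ≠ ∞ ∧ ∀ F, PowerGrowth C α β F → ∀ t, 0 < t → F t ≤ C' * headNorm q F t := by
  set c := ENNReal.ofReal (Real.log 2) ^ (1 / q.toReal)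
  have hc : c ≠ 0 ∧ c ≠ ∞ := by
    have hlog : ENNReal.ofReal (Real.log 2) ≠ 0 := by simp [Real.log_pos]
    exact ⟨(ENNReal.rpow_pos (pos_iff_ne_zero.2 hlog) ofReal_ne_top).ne', by finiteness⟩
  set D := C * ENNReal.ofReal 2 ^ ((|α| + |β|) * 1)
  have hD : D ≠ ∞ := by finiteness
  refine ⟨c⁻¹ * D, by finiteness [hc.1], fun F hF t ht => ?_⟩
  have hmass : dlog (Ico (t / 2) t) = ENNReal.ofReal (Real.log 2) := by
    rw [dlog_Ico (by positivity) (by linarith), div_div_cancel₀ ht.ne']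
  have hnorm : eLpNorm (fun _ => F t) q (dlog.restrict (Ico (t / 2) t)) = F t * c := by
    rw [eLpNorm_const _ hq (by simp [hmass, Real.log_pos]), Measure.restrict_apply_univ, hmass,
      enorm_eq_self]
  have hpt : ∀ u ∈ Ico (t / 2) t, F t ≤ D * F u := fun u hu => by
    have hu0 : 0 < u := by linarith [hu.1]
    refine hF.le_of_abs_logb_sub_le ht hu0 ?_
    rw [← Real.logb_div ht.ne' hu0.ne',
      abs_of_nonneg (Real.logb_nonneg one_lt_two ((one_le_div hu0).2 hu.2.le)),
      Real.logb_le_iff_le_rpow one_lt_two (div_pos ht hu0), Real.rpow_one, div_le_iff₀ hu0]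
    linarith [hu.1]
  rw [mul_assoc, ← ENNReal.mul_inv_cancel_right (a := F t) hc.1 hc.2, ← hnorm, mul_comm]
  gcongr
  calc eLpNorm (fun _ => F t) q (dlog.restrict (Ico (t / 2) t))
      ≤ D * eLpNorm F q (dlog.restrict (Ico (t / 2) t)) :=
        eLpNorm_le_const_mul_of_ae_le hD <| by
          filter_upwards [ae_restrict_mem measurableSet_Ico] with u hu using hpt u hu
    _ ≤ D * headNorm q F t := by
        gcongr
        refine eLpNorm_mono_measure F (Measure.restrict_mono ?_ le_rfl)
        exact fun u hu => ⟨by linarith [hu.1], hu.2⟩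

end HeadTailNorms

section MixedNorms

variable {q r C m : ℝ≥0∞} {α β η τ t u : ℝ} {F w w' : ℝ → ℝ≥0∞}

lemma RegularlyVarying.congr (hw : RegularlyVarying η w) (h : ∀ t, 0 < t → w t = w' t) :
    RegularlyVarying η w' where
  ne_zero t ht := h t ht ▸ hw.ne_zero t ht
  ne_top t ht := h t ht ▸ hw.ne_top t ht
  growth ε hε := by
    obtain ⟨C, hC, hw⟩ := hw.growth ε hε
    exact ⟨C, hC, fun s u hs hu => by simpa only [h s hs, h u hu] using hw hs hu⟩

lemma regularlyVarying_headNorm (hw : RegularlyVarying η w) (hq : q ≠ 0)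
    (h1 : headNorm q w 1 ≠ ∞) : RegularlyVarying η (headNorm q w) where
  ne_zero t ht h0 := by
    obtain ⟨C, hC, hgrowth⟩ := hw.growth 1 one_pos
    obtain ⟨C', -, hle⟩ := exists_le_headNorm hq hC
    exact hw.ne_zero t ht (by simpa [h0] using hle w hgrowth t ht)
  ne_top t ht := by
    obtain ⟨C, hC, hgrowth⟩ := hw.growth 1 one_pos
    have hpow : brokenPow (η - 1) (η + 1) (t / 1) ≠ ∞ := brokenPow_ne_top (by simpa)
    exact ne_top_of_le_ne_top (by finiteness) (hgrowth.headNorm hC ht one_pos)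
  growth ε hε := by
    obtain ⟨C, hC, hgrowth⟩ := hw.growth ε hε
    exact ⟨C, hC, hgrowth.headNorm hC⟩

lemma regularlyVarying_tailNorm (hw : RegularlyVarying η w) (hq : q ≠ 0)
    (h1 : tailNorm q w 1 ≠ ∞) : RegularlyVarying η (tailNorm q w) := by
  rw [tailNorm_eq_headNorm one_pos, inv_one] at h1
  rw [← neg_neg η]
  exact (regularlyVarying_headNorm hw.comp_inv hq h1).comp_inv.congr fun t ht =>
    (tailNorm_eq_headNorm ht).symm

lemma exists_le_tailNorm (hq : q ≠ 0) (hC : C ≠ ∞) :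
    ∃ C', C' ≠ ∞ ∧ ∀ F, PowerGrowth C α β F → ∀ t, 0 < t → F t ≤ C' * tailNorm q F t := by
  obtain ⟨C', hC', h⟩ := exists_le_headNorm (α := -β) (β := -α) hq hC
  refine ⟨C', hC', fun F hF t ht => ?_⟩
  simpa only [inv_inv, tailNorm_eq_headNorm ht] using h _ hF.comp_inv t⁻¹ (inv_pos.2 ht)

lemma eLpNorm_dlog_comp_div (hu : 0 < u) :
    eLpNorm (fun s => F (s / u)) q dlog = eLpNorm F q dlog := by
  have hmul : MeasurableEmbedding (u⁻¹ * · : ℝ → ℝ) :=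
    measurableEmbedding_mulLeft₀ (inv_pos.2 hu).ne'
  conv_rhs => rw [← dlog_map_mul_left (inv_pos.2 hu), hmul.eLpNorm_map_measure]
  simp only [Function.comp_def, div_eq_inv_mul]

lemma eLpNorm_brokenPow_ne_top (hα : 0 < α) (hβ : β < 0) :
    eLpNorm (brokenPow α β) q dlog ≠ ∞ := by
  have hhead : headNorm q (brokenPow α β) 1 ≤ 1 * headNorm q (fun u => ENNReal.ofReal u ^ α) 1 :=
    headNorm_le_const_mul one_ne_top fun u _ hu => by rw [one_mul, brokenPow_of_le hu.le]
  have htail : tailNorm q (brokenPow α β) 1 ≤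
      1 * headNorm q (fun u => ENNReal.ofReal u ^ (-β)) 1 := by
    rw [tailNorm_eq_headNorm one_pos, inv_one]
    refine headNorm_le_const_mul one_ne_top fun u hu0 hu => ?_
    rw [one_mul, brokenPow_inv hu0, brokenPow_of_le hu.le]
  refine ne_top_of_le_ne_top ?_ (eLpNorm_dlog_le_headNorm_add_tailNorm one_pos)
  have h1 := ne_top_of_le_ne_top
    (ENNReal.mul_ne_top one_ne_top (headNorm_rpow_one_ne_top (q := q) hα)) hhead
  have h2 := ne_top_of_le_ne_top
    (ENNReal.mul_ne_top one_ne_top (headNorm_rpow_one_ne_top (q := q) (neg_pos.2 hβ))) htail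
  finiteness

/-- The quasi-norm of an `𝓡`-space, with the weights and the K-functional absorbed into `w`
and `F`. -/
def tailMixedNorm (r q : ℝ≥0∞) (w F : ℝ → ℝ≥0∞) : ℝ≥0∞ :=
  eLpNorm (fun t => w t * tailNorm q F t) r dlog

/-- The quasi-norm of an `𝓛`-space, with the weights and the K-functional absorbed into `w`
and `F`. -/
def headMixedNorm (r q : ℝ≥0∞) (w F : ℝ → ℝ≥0∞) : ℝ≥0∞ :=
  eLpNorm (fun t => w t * headNorm q F t) r dlog

lemma headMixedNorm_eq_tailMixedNorm :
    headMixedNorm r q w F = tailMixedNorm r q (fun t => w t⁻¹) (fun t => F t⁻¹) := by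
  have h := eLpNorm_dlog_comp_inv r (fun t => w t * headNorm q F t) univ
  rw [preimage_univ, Measure.restrict_univ] at h
  rw [headMixedNorm, ← h, tailMixedNorm]
  refine eLpNorm_congr_ae (ae_dlog_pos.mono fun t ht => ?_)
  simp only [tailNorm_comp_inv ht]

lemma exists_mul_headNorm_le_tailMixedNorm (hq : q ≠ 0) (hC : C ≠ ∞) :
    ∃ C', C' ≠ ∞ ∧ ∀ F, PowerGrowth C α β F → ∀ u, 0 < u →
      F u * headNorm r w u ≤ C' * tailMixedNorm r q w F := by
  obtain ⟨C', hC', hle⟩ := exists_le_tailNorm (α := α) (β := β) hq hC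
  refine ⟨C', hC', fun F hF u hu => ?_⟩
  have hpt : ∀ t, 0 < t → t < u → F u * w t ≤ C' * (w t * tailNorm q F t) := fun t _ htu =>
    calc F u * w t ≤ C' * tailNorm q F t * w t := by
          gcongr
          exact (hle F hF u hu).trans (by gcongr; exact tailNorm_anti_right htu.le)
      _ = C' * (w t * tailNorm q F t) := by ring
  calc F u * headNorm r w u ≤ headNorm r (fun t => F u * w t) u := mul_eLpNorm_le _
    _ ≤ C' * headNorm r (fun t => w t * tailNorm q F t) u := headNorm_le_const_mul hC' hpt
    _ ≤ C' * tailMixedNorm r q w F := by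
        gcongr
        exact eLpNorm_mono_measure _ Measure.restrict_le_self

lemma exists_mul_tailNorm_le_headMixedNorm (hq : q ≠ 0) (hC : C ≠ ∞) :
    ∃ C', C' ≠ ∞ ∧ ∀ F, PowerGrowth C α β F → ∀ u, 0 < u →
      F u * tailNorm r w u ≤ C' * headMixedNorm r q w F := by
  obtain ⟨C', hC', h⟩ := exists_mul_headNorm_le_tailMixedNorm (r := r) (α := -β) (β := -α)
    (w := fun t => w t⁻¹) hq hC
  refine ⟨C', hC', fun F hF u hu => ?_⟩
  simpa only [inv_inv, tailNorm_eq_headNorm hu, headMixedNorm_eq_tailMixedNorm] using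
    h _ hF.comp_inv u⁻¹ (inv_pos.2 hu)

lemma exists_tailNorm_le_of_le_brokenPow (hτ : 0 < τ) (q : ℝ≥0∞) :
    ∃ C, C ≠ ∞ ∧ ∀ (F : ℝ → ℝ≥0∞) (u : ℝ) (m : ℝ≥0∞), 0 < u → m ≠ ∞ →
      (∀ s, 0 < s → F s ≤ m * brokenPow τ (-τ) (s / u)) →
      ∀ t, 0 < t → tailNorm q F t ≤ C * m * brokenPow 0 (-τ) (t / u) := by
  refine ⟨eLpNorm (brokenPow τ (-τ)) q dlog, eLpNorm_brokenPow_ne_top hτ (neg_lt_zero.2 hτ),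
    fun F u m hu hm hF t ht => ?_⟩
  have hv : 0 < max t u := lt_max_of_lt_left ht
  have hpt : ∀ s, t < s → F s ≤
      m * brokenPow 0 (-τ) (t / u) * brokenPow τ (-τ) (s / max t u) := fun s hs => by
    refine (hF s (ht.trans hs)).trans_eq ?_
    rcases le_total t u with htu | hut
    · rw [brokenPow_of_le ((div_le_one hu).2 htu), max_eq_right htu, ENNReal.rpow_zero, mul_one]
    · rw [max_eq_left hut, mul_assoc, brokenPow_of_ge ((one_le_div hu).2 (hut.trans hs.le)),
        brokenPow_of_ge ((one_le_div hu).2 hut), brokenPow_of_ge ((one_le_div ht).2 hs.le),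
        ← ENNReal.mul_rpow_of_ne_top ofReal_ne_top ofReal_ne_top,
        ← ENNReal.ofReal_mul (by positivity), mul_comm (t / u),
        div_mul_div_cancel₀ ht.ne']
  have hpow : brokenPow 0 (-τ) (t / u) ≠ ∞ := brokenPow_ne_top (div_pos ht hu)
  calc tailNorm q F t
      ≤ m * brokenPow 0 (-τ) (t / u) * tailNorm q (fun s => brokenPow τ (-τ) (s / max t u)) t :=
        tailNorm_le_const_mul (by finiteness) hpt
    _ ≤ m * brokenPow 0 (-τ) (t / u) * eLpNorm (brokenPow τ (-τ)) q dlog := by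
        gcongr
        rw [← eLpNorm_dlog_comp_div hv]
        exact eLpNorm_mono_measure _ Measure.restrict_le_self
    _ = eLpNorm (brokenPow τ (-τ)) q dlog * m * brokenPow 0 (-τ) (t / u) := by ring

lemma RegularlyVarying.exists_eLpNorm_mul_brokenPow_le (hw : RegularlyVarying 0 w) (hr : r ≠ 0)
    (hτ : 0 < τ) : ∃ C, C ≠ ∞ ∧ ∀ u, 0 < u →
      eLpNorm (fun t => w t * brokenPow 0 (-τ) (t / u)) r dlog ≤ C * headNorm r w u := by
  obtain ⟨A, hA, hgrowth⟩ := hw.growth (τ / 2) (half_pos hτ)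
  obtain ⟨B, hB, hle⟩ := exists_le_headNorm (α := 0 - τ / 2) (β := 0 + τ / 2) hr hA
  have hD : eLpNorm (brokenPow (τ / 2) (-(τ / 2))) r dlog ≠ ∞ :=
    eLpNorm_brokenPow_ne_top (half_pos hτ) (neg_lt_zero.2 (half_pos hτ))
  set D := eLpNorm (brokenPow (τ / 2) (-(τ / 2))) r dlog
  have hconst : 2 ^ r⁻¹.toReal * (1 + A * B * D) ≠ ∞ :=
    ENNReal.mul_ne_top (by simp) (by finiteness)
  refine ⟨_, hconst, fun u hu => ?_⟩
  have hhead : headNorm r (fun t => w t * brokenPow 0 (-τ) (t / u)) u ≤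
      1 * headNorm r w u := headNorm_le_const_mul one_ne_top fun t _ htu => by
    rw [brokenPow_of_le ((div_le_one hu).2 htu.le), ENNReal.rpow_zero, mul_one, one_mul]
  have htail : tailNorm r (fun t => w t * brokenPow 0 (-τ) (t / u)) u ≤
      A * w u * tailNorm r (fun t => brokenPow (τ / 2) (-(τ / 2)) (t / u)) u := by
    refine tailNorm_le_const_mul (ENNReal.mul_ne_top hA (hw.ne_top u hu)) fun t hut => ?_
    have hx : 1 ≤ t / u := (one_le_div hu).2 hut.le
    have hpow : brokenPow (0 - τ / 2) (0 + τ / 2) (t / u) * brokenPow 0 (-τ) (t / u) =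
        brokenPow (τ / 2) (-(τ / 2)) (t / u) := by
      rw [brokenPow_mul (by positivity), brokenPow_of_ge hx, brokenPow_of_ge hx]
      ring_nf
    calc w t * brokenPow 0 (-τ) (t / u)
        ≤ A * brokenPow (0 - τ / 2) (0 + τ / 2) (t / u) * w u * brokenPow 0 (-τ) (t / u) := by
          gcongr
          exact hgrowth (hu.trans hut) hu
      _ = A * w u * brokenPow (τ / 2) (-(τ / 2)) (t / u) := by rw [← hpow]; ring
  have hfull : tailNorm r (fun t => brokenPow (τ / 2) (-(τ / 2)) (t / u)) u ≤ D :=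
    (eLpNorm_mono_measure _ Measure.restrict_le_self).trans_eq (eLpNorm_dlog_comp_div hu)
  calc eLpNorm (fun t => w t * brokenPow 0 (-τ) (t / u)) r dlog
      ≤ 2 ^ r⁻¹.toReal * (1 * headNorm r w u + A * (B * headNorm r w u) * D) := by
        refine (eLpNorm_dlog_le_headNorm_add_tailNorm hu).trans ?_
        gcongr
        exact htail.trans (by gcongr; exact hle w hgrowth u hu)
    _ = 2 ^ r⁻¹.toReal * (1 + A * B * D) * headNorm r w u := by ring

lemma RegularlyVarying.exists_tailMixedNorm_le_headNorm (hw : RegularlyVarying 0 w) (hr : r ≠ 0)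
    (hτ : 0 < τ) (q : ℝ≥0∞) : ∃ C, C ≠ ∞ ∧ ∀ (F : ℝ → ℝ≥0∞) (u : ℝ) (m : ℝ≥0∞), 0 < u → m ≠ ∞ →
      (∀ s, 0 < s → F s ≤ m * brokenPow τ (-τ) (s / u)) →
      tailMixedNorm r q w F ≤ C * m * headNorm r w u := by
  obtain ⟨A, hA, htail⟩ := exists_tailNorm_le_of_le_brokenPow hτ q
  obtain ⟨B, hB, hnorm⟩ := hw.exists_eLpNorm_mul_brokenPow_le hr hτ
  refine ⟨A * B, ENNReal.mul_ne_top hA hB, fun F u m hu hm hF => ?_⟩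
  calc tailMixedNorm r q w F
      ≤ A * m * eLpNorm (fun t => w t * brokenPow 0 (-τ) (t / u)) r dlog :=
        eLpNorm_le_const_mul_of_ae_le (ENNReal.mul_ne_top hA hm) <| ae_dlog_pos.mono fun t ht =>
          (mul_le_mul_right (htail F u m hu hm hF t ht) (w t)).trans_eq (by ring)
    _ ≤ A * m * (B * headNorm r w u) := by
        gcongr
        exact hnorm u hu
    _ = A * B * m * headNorm r w u := by ring

lemma RegularlyVarying.exists_headMixedNorm_le_tailNorm (hw : RegularlyVarying 0 w) (hr : r ≠ 0)
    (hτ : 0 < τ) (q : ℝ≥0∞) : ∃ C, C ≠ ∞ ∧ ∀ (F : ℝ → ℝ≥0∞) (u : ℝ) (m : ℝ≥0∞), 0 < u → m ≠ ∞ →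
      (∀ s, 0 < s → F s ≤ m * brokenPow τ (-τ) (s / u)) →
      headMixedNorm r q w F ≤ C * m * tailNorm r w u := by
  have hw' : RegularlyVarying 0 fun t => w t⁻¹ := by simpa only [neg_zero] using hw.comp_inv
  obtain ⟨C, hC, h⟩ := hw'.exists_tailMixedNorm_le_headNorm hr hτ q
  refine ⟨C, hC, fun F u m hu hm hF => ?_⟩
  rw [headMixedNorm_eq_tailMixedNorm, tailNorm_eq_headNorm hu]
  refine h _ _ m (inv_pos.2 hu) hm fun s hs => (hF s⁻¹ (inv_pos.2 hs)).trans_eq ?_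
  have harg : s⁻¹ / u = (s / u⁻¹)⁻¹ := by rw [inv_div, inv_div_left, div_eq_mul_inv]; ring
  rw [harg, brokenPow_inv (div_pos hs (inv_pos.2 hu)), neg_neg]

end MixedNorms

section KFunctional

variable {N₀ N₁ N₀' N₁' : G → ℝ≥0∞} {W W₀ W₁ v w : ℝ → ℝ≥0∞} {ρ : ℝ → ℝ} {α β σ t : ℝ}
  {q r : ℝ≥0∞} {f : G}

/-- An extended-real-valued quasi-norm on an abelian group, with invariance under negation
in place of homogeneity. -/
structure IsQuasinorm (N : G → ℝ≥0∞) : Prop where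
  map_zero : N 0 = 0
  map_neg : ∀ f, N (-f) = N f
  add_le : ∃ C, C ≠ ∞ ∧ ∀ f g, N (f + g) ≤ C * (N f + N g)

lemma le_const_mul_Kf {a C : ℝ≥0∞} (hC : C ≠ 0 ∧ C ≠ ∞)
    (h : ∀ g, a ≤ C * (N₀ g + ENNReal.ofReal t * N₁ (f - g))) : a ≤ C * Kf N₀ N₁ t f := by
  rw [Kf, ENNReal.mul_iInf_of_ne hC.1 hC.2]
  exact le_iInf h

lemma powerGrowth_Kf (N₀ N₁ : G → ℝ≥0∞) (f : G) : PowerGrowth 1 0 1 fun t => Kf N₀ N₁ t f := by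
  intro s u hs hu
  have hsu : 0 < s / u := div_pos hs hu
  have hpow : brokenPow 0 1 (s / u) = max 1 (ENNReal.ofReal (s / u)) := by
    rw [brokenPow_eq_max zero_le_one, ENNReal.rpow_zero, ENNReal.rpow_one]
  rw [one_mul]
  refine le_const_mul_Kf ⟨brokenPow_ne_zero hsu, brokenPow_ne_top hsu⟩ fun g => ?_
  refine (iInf_le _ g).trans ?_
  rw [mul_add, hpow]
  refine add_le_add (le_mul_of_one_le_left' (le_max_left _ _)) ?_
  calc ENNReal.ofReal s * N₁ (f - g)
      = ENNReal.ofReal (s / u) * (ENNReal.ofReal u * N₁ (f - g)) := by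
        rw [← mul_assoc, ← ENNReal.ofReal_mul hsu.le, div_mul_cancel₀ _ hu.ne']
    _ ≤ max 1 (ENNReal.ofReal (s / u)) * (ENNReal.ofReal u * N₁ (f - g)) := by
        gcongr
        exact le_max_right _ _

lemma Kf_le_left (h₁ : IsQuasinorm N₁) : Kf N₀ N₁ t f ≤ N₀ f :=
  (iInf_le _ f).trans_eq (by rw [sub_self, h₁.map_zero, mul_zero, add_zero])

lemma Kf_le_right (h₀ : IsQuasinorm N₀) : Kf N₀ N₁ t f ≤ ENNReal.ofReal t * N₁ f :=
  (iInf_le _ 0).trans_eq (by rw [h₀.map_zero, sub_zero, zero_add])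

lemma Kf_neg (h₀ : IsQuasinorm N₀) (h₁ : IsQuasinorm N₁) : Kf N₀ N₁ t (-f) = Kf N₀ N₁ t f := by
  refine (Equiv.neg G).iInf_congr fun g => ?_
  rw [Equiv.neg_apply, h₀.map_neg, ← h₁.map_neg (f - -g), neg_sub', neg_neg]

lemma exists_Kf_add_le (h₀ : IsQuasinorm N₀) (h₁ : IsQuasinorm N₁) :
    ∃ C, C ≠ ∞ ∧ ∀ t f g, Kf N₀ N₁ t (f + g) ≤ C * (Kf N₀ N₁ t f + Kf N₀ N₁ t g) := by
  obtain ⟨A, hA, h₀⟩ := h₀.add_le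
  obtain ⟨B, hB, h₁⟩ := h₁.add_le
  have hC : A + B + 1 ≠ 0 ∧ A + B + 1 ≠ ∞ := ⟨by simp, by finiteness⟩
  refine ⟨A + B + 1, hC.2, fun t f g => ?_⟩
  rw [Kf, Kf, Kf, ENNReal.iInf_add, ENNReal.mul_iInf_of_ne hC.1 hC.2]
  refine le_iInf fun x => ?_
  rw [ENNReal.add_iInf, ENNReal.mul_iInf_of_ne hC.1 hC.2]
  refine le_iInf fun y => (iInf_le _ (x + y)).trans ?_
  calc N₀ (x + y) + ENNReal.ofReal t * N₁ (f + g - (x + y))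
      ≤ A * (N₀ x + N₀ y) + ENNReal.ofReal t * (B * (N₁ (f - x) + N₁ (g - y))) := by
        rw [add_sub_add_comm]
        gcongr
        exacts [h₀ x y, h₁ _ _]
    _ ≤ (A + B + 1) * (N₀ x + N₀ y) +
          ENNReal.ofReal t * ((A + B + 1) * (N₁ (f - x) + N₁ (g - y))) := by
        gcongr
        exacts [le_add_right le_self_add, le_add_right le_add_self]
    _ = (A + B + 1) * (N₀ x + ENNReal.ofReal t * N₁ (f - x) +
          (N₀ y + ENNReal.ofReal t * N₁ (g - y))) := by ring

/-- `N` behaves like the quasi-norm `sup_u W u * K(u, f)` of an intermediate space: it dominates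
each `W u * K(u, f)`, and is dominated by a single one as soon as `K(·, f)` decays like a broken
power with exponents `α`, `β` away from `u`. Only these two properties of the spaces `Ā^𝓡` and
`Ā^𝓛` enter the interpolation argument. -/
structure IsIntermediate (N₀ N₁ : G → ℝ≥0∞) (α β : ℝ) (W : ℝ → ℝ≥0∞) (N : G → ℝ≥0∞) : Prop where
  lower : ∃ C, C ≠ ∞ ∧ ∀ f u, 0 < u → W u * Kf N₀ N₁ u f ≤ C * N f
  upper : ∃ C, C ≠ ∞ ∧ ∀ f u m, 0 < u → m ≠ ∞ →
    (∀ s, 0 < s → Kf N₀ N₁ s f ≤ m * brokenPow α β (s / u)) → N f ≤ C * m * W u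

lemma RegularlyVarying.exists_mul_le_brokenPow (hv : RegularlyVarying (-σ) v) (hβ : β < σ)
    (hα : σ < α) : ∃ τ, 0 < τ ∧ ∃ C, C ≠ ∞ ∧ ∀ (F : ℝ → ℝ≥0∞) (u : ℝ) (m : ℝ≥0∞), 0 < u →
      (∀ s, 0 < s → F s ≤ m * brokenPow α β (s / u)) →
      ∀ s, 0 < s → v s * F s ≤ C * m * v u * brokenPow τ (-τ) (s / u) := by
  set τ := min (σ - β) (α - σ) / 2
  have hτ : 0 < τ := half_pos (lt_min (sub_pos.2 hβ) (sub_pos.2 hα))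
  have hτβ : τ + τ ≤ σ - β := (add_halves _).trans_le (min_le_left _ _)
  have hτα : τ + τ ≤ α - σ := (add_halves _).trans_le (min_le_right _ _)
  obtain ⟨C, hC, hgrowth⟩ := hv.growth τ hτ
  refine ⟨τ, hτ, C, hC, fun F u m hu hF s hs => ?_⟩
  calc v s * F s
      ≤ C * brokenPow (-σ - τ) (-σ + τ) (s / u) * v u * (m * brokenPow α β (s / u)) := by
        gcongr
        exacts [hgrowth hs hu, hF s hs]
    _ = C * m * v u * brokenPow (-σ - τ + α) (-σ + τ + β) (s / u) := by
        rw [← brokenPow_mul (div_pos hs hu)]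
        ring
    _ ≤ C * m * v u * brokenPow τ (-τ) (s / u) := by
        gcongr
        exact brokenPow_mono (by linarith) (by linarith)

lemma isIntermediate_tailMixedNorm (hv : RegularlyVarying (-σ) v) (hw : RegularlyVarying 0 w)
    (hr : r ≠ 0) (hq : q ≠ 0) (hβ : β < σ) (hα : σ < α) :
    IsIntermediate N₀ N₁ α β (fun u => v u * headNorm r w u)
      fun f => tailMixedNorm r q w fun u => v u * Kf N₀ N₁ u f where
  lower := by
    obtain ⟨A, hA, hgrowth⟩ := hv.growth 1 one_pos
    obtain ⟨C, hC, h⟩ := exists_mul_headNorm_le_tailMixedNorm hq (ENNReal.mul_ne_top hA one_ne_top)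
    exact ⟨C, hC, fun f u hu => (mul_right_comm _ _ _).trans_le
      (h _ (hgrowth.mul (powerGrowth_Kf N₀ N₁ f)) u hu)⟩
  upper := by
    obtain ⟨τ, hτ, A, hA, hbound⟩ := hv.exists_mul_le_brokenPow hβ hα
    obtain ⟨C, hC, h⟩ := hw.exists_tailMixedNorm_le_headNorm hr hτ q
    refine ⟨C * A, ENNReal.mul_ne_top hC hA, fun f u m hu hm hf => ?_⟩
    have hvu := hv.ne_top u hu
    exact (h _ u _ hu (by finiteness) (hbound _ u m hu hf)).trans_eq (by ring)

lemma isIntermediate_headMixedNorm (hv : RegularlyVarying (-σ) v) (hw : RegularlyVarying 0 w)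
    (hr : r ≠ 0) (hq : q ≠ 0) (hβ : β < σ) (hα : σ < α) :
    IsIntermediate N₀ N₁ α β (fun u => v u * tailNorm r w u)
      fun f => headMixedNorm r q w fun u => v u * Kf N₀ N₁ u f where
  lower := by
    obtain ⟨A, hA, hgrowth⟩ := hv.growth 1 one_pos
    obtain ⟨C, hC, h⟩ := exists_mul_tailNorm_le_headMixedNorm hq (ENNReal.mul_ne_top hA one_ne_top)
    exact ⟨C, hC, fun f u hu => (mul_right_comm _ _ _).trans_le
      (h _ (hgrowth.mul (powerGrowth_Kf N₀ N₁ f)) u hu)⟩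
  upper := by
    obtain ⟨τ, hτ, A, hA, hbound⟩ := hv.exists_mul_le_brokenPow hβ hα
    obtain ⟨C, hC, h⟩ := hw.exists_headMixedNorm_le_tailNorm hr hτ q
    refine ⟨C * A, ENNReal.mul_ne_top hC hA, fun f u m hu hm hf => ?_⟩
    have hvu := hv.ne_top u hu
    exact (h _ u _ hu (by finiteness) (hbound _ u m hu hf)).trans_eq (by ring)

lemma IsIntermediate.exists_mul_Kf_le (h₀ : IsQuasinorm N₀) (h₁ : IsQuasinorm N₁)
    {α' β' : ℝ} (hN₀ : IsIntermediate N₀ N₁ α β W₀ N₀') (hN₁ : IsIntermediate N₀ N₁ α' β' W₁ N₁')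
    (hW : ∀ u, 0 < u → W₀ u = ENNReal.ofReal (ρ u) * W₁ u) :
    ∃ C, C ≠ ∞ ∧ ∀ f u, 0 < u → W₀ u * Kf N₀ N₁ u f ≤ C * Kf N₀' N₁' (ρ u) f := by
  obtain ⟨D, hD, hK⟩ := exists_Kf_add_le h₀ h₁
  obtain ⟨A, hA, hN₀⟩ := hN₀.lower
  obtain ⟨B, hB, hN₁⟩ := hN₁.lower
  have hC : D * (A + B) + 1 ≠ 0 ∧ D * (A + B) + 1 ≠ ∞ := ⟨by simp, by finiteness⟩
  refine ⟨_, hC.2, fun f u hu => le_const_mul_Kf hC fun g => ?_⟩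
  calc W₀ u * Kf N₀ N₁ u f
      ≤ W₀ u * (D * (Kf N₀ N₁ u g + Kf N₀ N₁ u (f - g))) := by
        gcongr
        simpa using hK u g (f - g)
    _ = D * (W₀ u * Kf N₀ N₁ u g + ENNReal.ofReal (ρ u) * (W₁ u * Kf N₀ N₁ u (f - g))) := by
        rw [hW u hu]
        ring
    _ ≤ D * ((A + B) * N₀' g + ENNReal.ofReal (ρ u) * ((A + B) * N₁' (f - g))) := by
        refine mul_le_mul_right (add_le_add ?_ (mul_le_mul_right ?_ _)) _
        · exact (hN₀ g u hu).trans (by gcongr; exact le_self_add)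
        · exact (hN₁ _ u hu).trans (by gcongr; exact le_add_self)
    _ = D * (A + B) * (N₀' g + ENNReal.ofReal (ρ u) * N₁' (f - g)) := by ring
    _ ≤ (D * (A + B) + 1) * (N₀' g + ENNReal.ofReal (ρ u) * N₁' (f - g)) := by
        gcongr
        exact le_self_add

lemma exists_split_of_Kf_lt (h₀ : IsQuasinorm N₀) (h₁ : IsQuasinorm N₁) {u : ℝ} {n : ℝ≥0∞}
    (hu : 0 < u) (hn : Kf N₀ N₁ u f < n) :
    ∃ g, (∀ s, Kf N₀ N₁ s g ≤ n) ∧ ∀ s, Kf N₀ N₁ s (f - g) ≤ n * ENNReal.ofReal (s / u) := by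
  obtain ⟨g, hg⟩ := iInf_lt_iff.1 hn
  refine ⟨g, fun s => (Kf_le_left h₁).trans (le_self_add.trans hg.le), fun s => ?_⟩
  calc Kf N₀ N₁ s (f - g) ≤ ENNReal.ofReal s * N₁ (f - g) := Kf_le_right h₀
    _ = ENNReal.ofReal u * N₁ (f - g) * ENNReal.ofReal (s / u) := by
        rw [mul_right_comm, ← ENNReal.ofReal_mul hu.le, mul_div_cancel₀ _ hu.ne']
    _ ≤ n * ENNReal.ofReal (s / u) := by
        gcongr
        exact le_add_self.trans hg.le

lemma exists_Kf_sub_le (h₀ : IsQuasinorm N₀) (h₁ : IsQuasinorm N₁) :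
    ∃ C, C ≠ ∞ ∧ ∀ t f g, Kf N₀ N₁ t (f - g) ≤ C * (Kf N₀ N₁ t f + Kf N₀ N₁ t g) := by
  obtain ⟨C, hC, h⟩ := exists_Kf_add_le h₀ h₁
  refine ⟨C, hC, fun t f g => ?_⟩
  rw [sub_eq_add_neg, ← Kf_neg h₀ h₁ (f := g)]
  exact h t f (-g)

lemma exists_split_of_Kf_le_brokenPow (h₀ : IsQuasinorm N₀) (h₁ : IsQuasinorm N₁) (hα : α ≤ 1)
    (hβ : 0 ≤ β) : ∃ C, C ≠ ∞ ∧ ∀ f u m n, 0 < u → m < n →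
      (∀ s, 0 < s → Kf N₀ N₁ s f ≤ m * brokenPow α β (s / u)) →
      ∃ g, ∀ s, 0 < s → Kf N₀ N₁ s g ≤ C * n * brokenPow α 0 (s / u) ∧
        Kf N₀ N₁ s (f - g) ≤ C * n * brokenPow 1 β (s / u) := by
  obtain ⟨D, hD, hsub⟩ := exists_Kf_sub_le h₀ h₁
  refine ⟨1 + 2 * D, by finiteness, fun f u m n hu hmn hf => ?_⟩
  have hlt : Kf N₀ N₁ u f < n := by
    have hfu := hf u hu
    rw [div_self hu.ne', brokenPow_one, mul_one] at hfu
    exact hfu.trans_lt hmn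
  obtain ⟨g, hleft, hright⟩ := exists_split_of_Kf_lt h₀ h₁ hu hlt
  have hle : ∀ s, 0 < s → Kf N₀ N₁ s f ≤ n * brokenPow α β (s / u) := fun s hs =>
    (hf s hs).trans (by gcongr)
  have hone : n ≤ (1 + 2 * D) * n := le_mul_of_one_le_left' le_self_add
  have hadd : ∀ {x y c : ℝ≥0∞}, x ≤ n * c → y ≤ n * c → D * (x + y) ≤ (1 + 2 * D) * n * c :=
    fun {x y c} hx hy => calc
      D * (x + y) ≤ D * (n * c + n * c) := by gcongr
      _ = 2 * D * n * c := by ring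
      _ ≤ (1 + 2 * D) * n * c := by gcongr; exact le_add_self
  refine ⟨g, fun s hs => ?_⟩
  rcases le_total (s / u) 1 with hx | hx
  · have hpow : ENNReal.ofReal (s / u) ≤ ENNReal.ofReal (s / u) ^ α := by
      simpa using ENNReal.rpow_le_rpow_of_exponent_ge (ENNReal.ofReal_le_one.2 hx) hα
    have hf := hle s hs
    simp only [brokenPow_of_le hx, ENNReal.rpow_one] at hf ⊢
    have hg := (hsub s f (f - g)).trans (hadd hf ((hright s).trans (by gcongr)))
    rw [_root_.sub_sub_cancel] at hg
    exact ⟨hg, (hright s).trans (by gcongr)⟩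
  · have hpow : 1 ≤ ENNReal.ofReal (s / u) ^ β := by
      simpa using ENNReal.rpow_le_rpow_of_exponent_le (ENNReal.one_le_ofReal.2 hx) hβ
    have hf := hle s hs
    simp only [brokenPow_of_ge hx, ENNReal.rpow_zero, mul_one] at hf ⊢
    exact ⟨(hleft s).trans hone,
      (hsub s f g).trans (hadd hf ((hleft s).trans (le_mul_of_one_le_right' hpow)))⟩

lemma IsIntermediate.exists_Kf_le_of_le_brokenPow (h₀ : IsQuasinorm N₀) (h₁ : IsQuasinorm N₁)
    (hN₀ : IsIntermediate N₀ N₁ α 0 W₀ N₀') (hN₁ : IsIntermediate N₀ N₁ 1 β W₁ N₁')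
    (hW : ∀ u, 0 < u → W₀ u = ENNReal.ofReal (ρ u) * W₁ u) (hW₀ : ∀ u, 0 < u → W₀ u ≠ ∞)
    (hα : α ≤ 1) (hβ : 0 ≤ β) :
    ∃ C, C ≠ ∞ ∧ ∀ f u m, 0 < u → m ≠ ∞ →
      (∀ s, 0 < s → Kf N₀ N₁ s f ≤ m * brokenPow α β (s / u)) →
      Kf N₀' N₁' (ρ u) f ≤ C * m * W₀ u := by
  obtain ⟨D, hD, hsplit⟩ := exists_split_of_Kf_le_brokenPow h₀ h₁ hα hβ
  obtain ⟨A, hA, hN₀⟩ := hN₀.upper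
  obtain ⟨B, hB, hN₁⟩ := hN₁.upper
  refine ⟨(A + B) * D, by finiteness, fun f u m hu hm hf => ?_⟩
  have key : ∀ n, m < n → n ≠ ∞ → Kf N₀' N₁' (ρ u) f ≤ n * ((A + B) * D * W₀ u) := by
    intro n hmn hn
    obtain ⟨g, hg⟩ := hsplit f u m n hu hmn hf
    calc Kf N₀' N₁' (ρ u) f ≤ N₀' g + ENNReal.ofReal (ρ u) * N₁' (f - g) := iInf_le _ g
      _ ≤ A * (D * n) * W₀ u + ENNReal.ofReal (ρ u) * (B * (D * n) * W₁ u) := by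
          gcongr
          · exact hN₀ g u _ hu (by finiteness) fun s hs => (hg s hs).1
          · exact hN₁ _ u _ hu (by finiteness) fun s hs => (hg s hs).2
      _ = n * ((A + B) * D * W₀ u) := by
          rw [hW u hu]
          ring
  have htop : (A + B) * D * W₀ u ≠ ∞ := by finiteness [hW₀ u hu]
  rw [mul_right_comm, mul_comm]
  refine ENNReal.le_mul_of_forall_lt (.inr htop) (.inl hm) fun n hmn b hb => ?_
  rcases eq_or_ne n ∞ with rfl | hn
  · exact le_top.trans_eq (ENNReal.top_mul hb.ne_bot).symm
  · exact (key n hmn hn).trans (by gcongr)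

end KFunctional

section Dyadic

variable {C r : ℝ≥0∞} {α β : ℝ}

lemma logb_two_zpow (n : ℤ) : Real.logb 2 ((2 : ℝ) ^ n) = n := by
  rw [← Real.rpow_intCast, Real.logb_rpow two_pos (by norm_num)]

lemma abs_logb_two_sub_floor_le (u : ℝ) :
    |Real.logb 2 u - Real.logb 2 ((2 : ℝ) ^ ⌊Real.logb 2 u⌋)| ≤ 1 := by
  rw [logb_two_zpow, Int.self_sub_floor, Int.abs_fract]
  exact (Int.fract_lt_one _).le

lemma eLpNorm_comp_floor_logb_two (x : ℤ → ℝ≥0∞) :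
    eLpNorm (fun u : ℝ => x ⌊Real.logb 2 u⌋) r dlog =
      ENNReal.ofReal (Real.log 2) ^ (1 / r).toReal * eLpNorm x r Measure.count := by
  have hx : Measurable x := measurable_of_countable x
  have hlog : ENNReal.ofReal (Real.log 2) ≠ 0 := by simpa using Real.log_pos one_lt_two
  rw [← smul_eq_mul, ← eLpNorm_smul_measure_of_ne_zero hlog, ← dlog_map_floor_logb_two,
    eLpNorm_map_measure hx.aestronglyMeasurable measurable_floor_logb_two.aemeasurable]
  rfl

lemma exists_eLpNorm_dlog_le (r : ℝ≥0∞) (hC : C ≠ ∞) :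
    ∃ D, D ≠ ∞ ∧ ∀ F, PowerGrowth C α β F →
      eLpNorm F r dlog ≤ D * eLpNorm (fun n : ℤ => F (2 ^ n)) r Measure.count := by
  set A := C * ENNReal.ofReal 2 ^ ((|α| + |β|) * 1)
  have hA : A ≠ ∞ := by finiteness
  refine ⟨A * ENNReal.ofReal (Real.log 2) ^ (1 / r).toReal, by finiteness, fun F hF => ?_⟩
  rw [mul_assoc, ← eLpNorm_comp_floor_logb_two]
  refine eLpNorm_le_const_mul_of_ae_le hA (ae_dlog_pos.mono fun u hu => ?_)
  exact hF.le_of_abs_logb_sub_le hu (by positivity) (abs_logb_two_sub_floor_le u)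

lemma exists_eLpNorm_count_le (r : ℝ≥0∞) (hC : C ≠ ∞) :
    ∃ D, D ≠ ∞ ∧ ∀ F, PowerGrowth C α β F →
      eLpNorm (fun n : ℤ => F (2 ^ n)) r Measure.count ≤ D * eLpNorm F r dlog := by
  set A := C * ENNReal.ofReal 2 ^ ((|α| + |β|) * 1)
  have hA : A ≠ ∞ := by finiteness
  set c := ENNReal.ofReal (Real.log 2) ^ (1 / r).toReal
  have hc0 : c ≠ 0 := (ENNReal.rpow_pos (by simpa using Real.log_pos one_lt_two) ofReal_ne_top).ne'
  have hc : c ≠ ∞ := by finiteness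
  refine ⟨c⁻¹ * A, ENNReal.mul_ne_top (ENNReal.inv_ne_top.2 hc0) hA, fun F hF => ?_⟩
  rw [mul_assoc, ← ENNReal.mul_le_iff_le_inv hc0 hc, ← eLpNorm_comp_floor_logb_two]
  refine eLpNorm_le_const_mul_of_ae_le hA (ae_dlog_pos.mono fun u hu => ?_)
  refine hF.le_of_abs_logb_sub_le (by positivity) hu ?_
  rw [abs_sub_comm]
  exact abs_logb_two_sub_floor_le u

end Dyadic

section Sequences

lemma map_count_le {α β : Type*} [MeasurableSpace α] [MeasurableSpace β] [Countable β]
    [MeasurableSingletonClass β] {f : α → β} (hf : Measurable f) {N : ℕ∞}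
    (hN : ∀ y, (f ⁻¹' {y}).encard ≤ N) :
    Measure.count.map f ≤ (N : ℝ≥0∞) • Measure.count := by
  refine Measure.le_iff.2 fun s hs => ?_
  rw [← Measure.tsum_indicator_apply_singleton _ s hs,
    ← Measure.tsum_indicator_apply_singleton _ s hs]
  refine ENNReal.tsum_le_tsum fun y => indicator_le_indicator ?_
  rw [Measure.map_apply hf (measurableSet_singleton y), Measure.smul_apply,
    Measure.count_singleton, smul_eq_mul, mul_one,
    Measure.count_apply (hf (measurableSet_singleton y))]
  exact_mod_cast hN y

lemma eLpNorm_comp_int_le {κ : ℤ → ℤ} {L : ℕ} (hκ : ∀ m n, κ m = κ n → m ≤ n + L)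
    (r : ℝ≥0∞) (x : ℤ → ℝ≥0∞) :
    eLpNorm (fun n => x (κ n)) r Measure.count ≤
      (2 * L + 1) ^ (1 / r).toReal * eLpNorm x r Measure.count := by
  have hfibre : ∀ k, (κ ⁻¹' {k}).encard ≤ ((2 * L + 1 : ℕ) : ℕ∞) := by
    intro k
    rcases (κ ⁻¹' {k}).eq_empty_or_nonempty with h | ⟨n, hn⟩
    · simp [h]
    have hsub : κ ⁻¹' {k} ⊆ Finset.Icc (n - L) (n + L) := fun m hm => by
      have hmn : κ m = κ n := hm.trans hn.symm
      have h₁ := hκ m n hmn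
      have h₂ := hκ n m hmn.symm
      simp only [Finset.coe_Icc, mem_Icc]
      lia
    refine (encard_le_encard hsub).trans_eq ?_
    rw [encard_coe_eq_coe_finsetCard, Int.card_Icc]
    congr 1
    lia
  have hx : Measurable x := measurable_of_countable x
  have hκm : Measurable κ := measurable_of_countable κ
  calc eLpNorm (fun n => x (κ n)) r Measure.count
      = eLpNorm x r (Measure.count.map κ) :=
        (eLpNorm_map_measure hx.aestronglyMeasurable hκm.aemeasurable).symm
    _ ≤ _ := by
      simpa using eLpNorm_le_of_measure_le_smul (f := x) (p := r) (map_count_le hκm hfibre)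

lemma eLpNorm_iSup_mul_le {A : Type*} [AddCommGroup A] [MeasurableSpace A]
    [MeasurableSingletonClass A] {r : ℝ≥0∞} (hr : r ≠ 0) (w x : A → ℝ≥0∞) :
    eLpNorm (fun k => ⨆ j, w (j - k) * x j) r Measure.count ≤
      eLpNorm w r Measure.count * eLpNorm x r Measure.count := by
  rcases eq_or_ne r ∞ with rfl | hr'
  · simp only [eLpNorm_exponent_top, eLpNormEssSup_count, enorm_eq_self]
    exact iSup_le fun k => iSup_le fun j => mul_le_mul' (le_iSup w _) (le_iSup x j)
  have hr0 : 0 < r.toReal := ENNReal.toReal_pos hr hr'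
  simp only [eLpNorm_eq_lintegral_rpow_enorm_toReal hr hr', lintegral_count, enorm_eq_self]
  rw [← ENNReal.mul_rpow_of_nonneg _ _ (by positivity)]
  gcongr
  calc ∑' k, (⨆ j, w (j - k) * x j) ^ r.toReal
      ≤ ∑' k, ∑' j, w (j - k) ^ r.toReal * x j ^ r.toReal := by
        refine ENNReal.tsum_le_tsum fun k => ?_
        rw [← ENNReal.le_rpow_inv_iff hr0]
        refine iSup_le fun j => ?_
        rw [ENNReal.le_rpow_inv_iff hr0, ENNReal.mul_rpow_of_nonneg _ _ hr0.le]
        exact ENNReal.le_tsum j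
    _ = ∑' j, (∑' k, w (j - k) ^ r.toReal) * x j ^ r.toReal := by
        rw [ENNReal.tsum_comm]
        simp only [ENNReal.tsum_mul_right]
    _ = (∑' k, w k ^ r.toReal) * ∑' j, x j ^ r.toReal := by
        rw [← ENNReal.tsum_mul_left]
        congr! 3 with j
        exact (Equiv.subLeft j).tsum_eq fun k => w k ^ r.toReal

end Sequences

section ChangeOfVariables

variable {A B C r : ℝ≥0∞} {α β α' β' a b c δ η : ℝ} {ρ : ℝ → ℝ} {ψ : ℤ → ℝ}

lemma PowerGrowth.logb_sub_le (hρ : PowerGrowth C α β fun u => ENNReal.ofReal (ρ u)) (hC : C ≠ ∞)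
    (hpos : ∀ u, 0 < u → 0 < ρ u) {s u : ℝ} (hs : 0 < s) (hu : 0 < u) :
    Real.logb 2 (ρ s) - Real.logb 2 (ρ u) ≤ Real.logb 2 C.toReal +
      (if s / u ≤ 1 then α else β) * (Real.logb 2 s - Real.logb 2 u) := by
  set γ := if s / u ≤ 1 then α else β
  have hsu : 0 < s / u := div_pos hs hu
  have hle : ρ s ≤ C.toReal * (s / u) ^ γ * ρ u := by
    have h : ENNReal.ofReal (ρ s) ≤ C * ENNReal.ofReal (s / u) ^ γ * ENNReal.ofReal (ρ u) :=
      hρ hs hu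
    rwa [← ENNReal.ofReal_toReal hC, ENNReal.ofReal_rpow_of_pos hsu,
      ← ENNReal.ofReal_mul ENNReal.toReal_nonneg, ← ENNReal.ofReal_mul (by positivity),
      ENNReal.ofReal_le_ofReal_iff (mul_nonneg (by positivity) (hpos u hu).le)] at h
  have hC0 : 0 < C.toReal := by
    refine ENNReal.toReal_nonneg.lt_of_ne' fun h => ?_
    rw [h, zero_mul, zero_mul] at hle
    exact (hpos s hs).not_ge hle
  have hρu := hpos u hu
  have hlog := Real.logb_le_logb_of_le one_lt_two (hpos s hs) hle
  rw [Real.logb_mul (by positivity) hρu.ne', Real.logb_mul hC0.ne' (by positivity),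
    Real.logb_rpow_eq_mul_logb_of_pos hsu, Real.logb_div hs.ne' hu.ne'] at hlog
  linarith

lemma RegularlyVarying.exists_logb_bounds (hη : 0 < η)
    (hρ : RegularlyVarying η fun u => ENNReal.ofReal (ρ u)) :
    ∃ c a b : ℝ, 0 < c ∧
      (∀ m n : ℤ, m ≤ n → c * (n - m) - a ≤ Real.logb 2 (ρ (2 ^ n)) - Real.logb 2 (ρ (2 ^ m))) ∧
      ∀ n : ℤ, Real.logb 2 (ρ (2 ^ (n + 1))) - Real.logb 2 (ρ (2 ^ n)) ≤ b := by
  obtain ⟨C, hC, h⟩ := hρ.growth (η / 2) (half_pos hη)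
  refine ⟨η / 2, Real.logb 2 C.toReal, Real.logb 2 C.toReal + (η + η / 2), half_pos hη,
    fun m n hmn => ?_, fun n => ?_⟩
  · have hle : (2 : ℝ) ^ m / 2 ^ n ≤ 1 :=
      (div_le_one (by positivity)).2 (zpow_le_zpow_right₀ one_le_two hmn)
    have hlog := h.logb_sub_le hC (fun u => hρ.pos) (s := 2 ^ m) (u := 2 ^ n) (by positivity)
      (by positivity)
    rw [if_pos hle, logb_two_zpow, logb_two_zpow] at hlog
    linarith
  · have hgt : ¬ (2 : ℝ) ^ (n + 1) / 2 ^ n ≤ 1 := by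
      rw [zpow_add_one₀ two_ne_zero, mul_div_cancel_left₀ _ (by positivity)]
      norm_num
    have hlog := h.logb_sub_le hC (fun u => hρ.pos) (s := 2 ^ (n + 1)) (u := 2 ^ n)
      (by positivity) (by positivity)
    rw [if_neg hgt, logb_two_zpow, logb_two_zpow] at hlog
    push_cast at hlog
    linarith

lemma exists_le_add_of_floor_eq (hc : 0 < c)
    (hψ : ∀ m n : ℤ, m ≤ n → c * (n - m) - a ≤ ψ n - ψ m) :
    ∃ L : ℕ, ∀ m n, ⌊ψ m⌋ = ⌊ψ n⌋ → m ≤ n + L := by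
  obtain ⟨L, hL⟩ := exists_nat_ge ((a + 1) / c)
  refine ⟨L, fun m n h => ?_⟩
  rcases le_total m n with hmn | hnm
  · lia
  have hdiff : ψ m - ψ n < 1 := (abs_lt.1 (Int.abs_sub_lt_one_of_floor_eq_floor h)).2
  have hlt : (m - n : ℝ) ≤ L := by
    refine le_trans ?_ hL
    rw [le_div_iff₀ hc]
    linarith [hψ n m hnm]
  have : (m : ℝ) ≤ n + L := by linarith
  exact_mod_cast this

lemma exists_coarse_inverse (hc : 0 < c)
    (hψ : ∀ m n : ℤ, m ≤ n → c * (n - m) - a ≤ ψ n - ψ m) (hb : ∀ n, ψ (n + 1) - ψ n ≤ b) :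
    ∃ (κ : ℤ → ℤ) (L : ℕ), (∀ n, |n - ψ (κ n)| ≤ b) ∧ ∀ m n, κ m = κ n → m ≤ n + L := by
  have hgreatest : ∀ n : ℤ, ∃ k, ψ k ≤ n ∧ ∀ j, ψ j ≤ n → j ≤ k := by
    refine fun n => Int.exists_greatest_of_bdd ?_ ?_
    · obtain ⟨M, hM⟩ := exists_nat_ge ((n - ψ 0 + a) / c)
      refine ⟨M, fun j hj => ?_⟩
      rcases le_total j 0 with h | h
      · lia
      have hle : (j : ℝ) ≤ M := by
        refine le_trans ?_ hM
        rw [le_div_iff₀ hc]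
        have := hψ 0 j h
        push_cast at this
        linarith
      exact_mod_cast hle
    · obtain ⟨M, hM⟩ := exists_nat_ge ((ψ 0 + a - n) / c)
      refine ⟨-M, ?_⟩
      have := hψ (-M) 0 (by lia)
      push_cast at this
      linarith [(div_le_iff₀ hc).1 hM]
  choose κ hle hmax using hgreatest
  have hclose : ∀ n, |n - ψ (κ n)| ≤ b := fun n => by
    have hlt : (n : ℝ) < ψ (κ n + 1) := not_le.1 fun h => by linarith [hmax n _ h]
    rw [abs_of_nonneg (sub_nonneg.2 (hle n))]
    linarith [hb (κ n)]
  obtain ⟨L, hL⟩ := exists_nat_ge b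
  refine ⟨κ, L, hclose, fun m n h => ?_⟩
  have hm := (abs_le.1 (hclose m)).2
  have : (m : ℝ) ≤ n + L := by linarith [h ▸ hle n]
  exact_mod_cast this

lemma powerGrowth_brokenPow (h : β ≤ α) : PowerGrowth 1 β α (brokenPow α β) := by
  have hinv : PowerGrowth 1 (-α) (-β) (brokenPow (-α) (-β)) := fun s u hs hu => by
    simpa [div_mul_cancel₀ s hu.ne'] using
      brokenPow_mul_le (y := u) (neg_le_neg h) (div_pos hs hu)
  simpa [← ENNReal.rpow_neg_one, brokenPow_rpow] using hinv.inv ⟨one_ne_zero, one_ne_top⟩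

lemma PowerGrowth.comp_div {F : ℝ → ℝ≥0∞} (hF : PowerGrowth C α β F) {x : ℝ} (hx : 0 < x) :
    PowerGrowth C α β fun s => F (s / x) := fun s u hs hu => by
  simpa only [div_div_div_cancel_right₀ hx.ne'] using hF (div_pos hs hx) (div_pos hu hx)

lemma exists_eLpNorm_le_of_le_comp (hη : 0 < η)
    (hρ : RegularlyVarying η fun u => ENNReal.ofReal (ρ u)) (r : ℝ≥0∞) (hA : A ≠ ∞) (hB : B ≠ ∞)
    (hC : C ≠ ∞) :
    ∃ D, D ≠ ∞ ∧ ∀ F H, PowerGrowth A α β F → PowerGrowth B α' β' H →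
      (∀ u, 0 < u → F u ≤ C * H (ρ u)) → eLpNorm F r dlog ≤ D * eLpNorm H r dlog := by
  obtain ⟨c, a, b, hc, hlower, -⟩ := hρ.exists_logb_bounds hη
  obtain ⟨L, hfibre⟩ := exists_le_add_of_floor_eq hc hlower
  obtain ⟨D₁, hD₁, hF⟩ := exists_eLpNorm_dlog_le (α := α) (β := β) r hA
  obtain ⟨D₂, hD₂, hH⟩ := exists_eLpNorm_count_le (α := α') (β := β') r hB
  set ν : ℤ → ℤ := fun n => ⌊Real.logb 2 (ρ (2 ^ n))⌋
  set E := C * (B * ENNReal.ofReal 2 ^ ((|α'| + |β'|) * 1))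
  have hE : E ≠ ∞ := by finiteness
  refine ⟨D₁ * (E * ((2 * L + 1) ^ (1 / r).toReal * D₂)), by finiteness, fun F H hFg hHg h => ?_⟩
  have hpt : ∀ n : ℤ, F (2 ^ n) ≤ E * H (2 ^ ν n) := fun n => by
    have hn : (0 : ℝ) < 2 ^ n := by positivity
    refine (h _ hn).trans ?_
    rw [mul_assoc]
    gcongr
    exact hHg.le_of_abs_logb_sub_le (hρ.pos hn) (by positivity) (abs_logb_two_sub_floor_le _)
  calc eLpNorm F r dlog ≤ D₁ * eLpNorm (fun n : ℤ => F (2 ^ n)) r Measure.count := hF F hFg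
    _ ≤ D₁ * (E * eLpNorm (fun n => H (2 ^ ν n)) r Measure.count) := by
        gcongr
        exact eLpNorm_le_const_mul_of_ae_le hE (.of_forall hpt)
    _ ≤ D₁ * (E * ((2 * L + 1) ^ (1 / r).toReal * (D₂ * eLpNorm H r dlog))) := by
        gcongr
        exact (eLpNorm_comp_int_le hfibre r fun n : ℤ => H (2 ^ n)).trans
          (by gcongr; exact hH H hHg)
    _ = D₁ * (E * ((2 * L + 1) ^ (1 / r).toReal * D₂)) * eLpNorm H r dlog := by ring

lemma exists_eLpNorm_dyadic_iSup_le (hr : r ≠ 0) (hδ : 0 < δ) (hA : A ≠ ∞) :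
    ∃ D, D ≠ ∞ ∧ ∀ F, PowerGrowth A α β F →
      eLpNorm (fun k : ℤ => ⨆ j : ℤ, brokenPow δ (-δ) (2 ^ (j - k)) * F (2 ^ j)) r Measure.count ≤
        D * eLpNorm F r dlog := by
  obtain ⟨D₁, hD₁, h₁⟩ := exists_eLpNorm_count_le (α := -δ) (β := δ) r one_ne_top
  obtain ⟨D₂, hD₂, h₂⟩ := exists_eLpNorm_count_le (α := α) (β := β) r hA
  have hpow : eLpNorm (brokenPow δ (-δ)) r dlog ≠ ∞ :=
    eLpNorm_brokenPow_ne_top hδ (neg_lt_zero.2 hδ)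
  refine ⟨D₁ * eLpNorm (brokenPow δ (-δ)) r dlog * D₂, by finiteness, fun F hF => ?_⟩
  rw [mul_assoc]
  exact (eLpNorm_iSup_mul_le hr (fun j : ℤ => brokenPow δ (-δ) (2 ^ j)) fun j => F (2 ^ j)).trans
    (mul_le_mul' (h₁ _ (powerGrowth_brokenPow (by linarith))) (h₂ F hF))

lemma exists_le_dyadic_iSup (hδ : 0 < δ) (hA : A ≠ ∞) :
    ∃ D, D ≠ ∞ ∧ ∀ F, PowerGrowth A α β F → ∀ (k : ℤ) (s : ℝ), 0 < s →
      brokenPow δ (-δ) (s / 2 ^ k) * F s ≤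
        D * ⨆ j : ℤ, brokenPow δ (-δ) (2 ^ (j - k)) * F (2 ^ j) := by
  refine ⟨1 * A * ENNReal.ofReal 2 ^ ((|-δ + α| + |δ + β|) * 1), by finiteness,
    fun F hF k s hs => ?_⟩
  have hpow := (powerGrowth_brokenPow (neg_le_self hδ.le)).comp_div (x := 2 ^ k) (by positivity)
  refine ((hpow.mul hF).le_of_abs_logb_sub_le hs (u := 2 ^ ⌊Real.logb 2 s⌋) (by positivity)
    (abs_logb_two_sub_floor_le s)).trans ?_
  rw [← zpow_sub₀ two_ne_zero]
  gcongr
  exact le_iSup (fun j : ℤ => brokenPow δ (-δ) (2 ^ (j - k)) * F (2 ^ j)) _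

lemma exists_eLpNorm_le_of_comp_le (hη : 0 < η)
    (hρ : RegularlyVarying η fun u => ENNReal.ofReal (ρ u)) (hr : r ≠ 0) (hδ : 0 < δ)
    (hA : A ≠ ∞) (hB : B ≠ ∞) (hC : C ≠ ∞) :
    ∃ D, D ≠ ∞ ∧ ∀ F H, PowerGrowth A α β F → PowerGrowth B α' β' H →
      (∀ u Z, 0 < u → (∀ s, 0 < s → brokenPow δ (-δ) (s / u) * F s ≤ Z) → H (ρ u) ≤ C * Z) →
      eLpNorm H r dlog ≤ D * eLpNorm F r dlog := by
  obtain ⟨c, a, b, hc, hlower, hstep⟩ := hρ.exists_logb_bounds hη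
  obtain ⟨κ, L, hκ, hfibre⟩ := exists_coarse_inverse hc hlower hstep
  obtain ⟨D₁, hD₁, hH⟩ := exists_eLpNorm_dlog_le (α := α') (β := β') r hB
  obtain ⟨D₂, hD₂, hsup⟩ := exists_eLpNorm_dyadic_iSup_le (α := α) (β := β) hr hδ hA
  obtain ⟨D₃, hD₃, hdyadic⟩ := exists_le_dyadic_iSup (α := α) (β := β) hδ hA
  set E := B * ENNReal.ofReal 2 ^ ((|α'| + |β'|) * b) * (C * D₃)
  have hE : E ≠ ∞ := by finiteness
  refine ⟨D₁ * (E * ((2 * L + 1) ^ (1 / r).toReal * D₂)), by finiteness, fun F H hFg hHg h => ?_⟩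
  set Z : ℤ → ℝ≥0∞ := fun k => ⨆ j : ℤ, brokenPow δ (-δ) (2 ^ (j - k)) * F (2 ^ j)
  have hpt : ∀ n : ℤ, H (2 ^ n) ≤ E * Z (κ n) := fun n => by
    have hk : (0 : ℝ) < 2 ^ κ n := by positivity
    calc H (2 ^ n) ≤ B * ENNReal.ofReal 2 ^ ((|α'| + |β'|) * b) * H (ρ (2 ^ κ n)) :=
          hHg.le_of_abs_logb_sub_le (by positivity) (hρ.pos hk)
            (by simpa only [logb_two_zpow] using hκ n)
      _ ≤ B * ENNReal.ofReal 2 ^ ((|α'| + |β'|) * b) * (C * (D₃ * Z (κ n))) := by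
          gcongr
          exact h _ _ hk (hdyadic F hFg (κ n))
      _ = E * Z (κ n) := by ring
  calc eLpNorm H r dlog ≤ D₁ * eLpNorm (fun n : ℤ => H (2 ^ n)) r Measure.count := hH H hHg
    _ ≤ D₁ * (E * eLpNorm (fun n => Z (κ n)) r Measure.count) := by
        gcongr
        exact eLpNorm_le_const_mul_of_ae_le hE (.of_forall hpt)
    _ ≤ D₁ * (E * ((2 * L + 1) ^ (1 / r).toReal * (D₂ * eLpNorm F r dlog))) := by
        gcongr
        exact (eLpNorm_comp_int_le hfibre r Z).trans (by gcongr; exact hsup F hFg)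
    _ = D₁ * (E * ((2 * L + 1) ^ (1 / r).toReal * D₂)) * eLpNorm F r dlog := by ring

lemma RegularlyVarying.exists_le_mul_brokenPow {U : ℝ → ℝ≥0∞} (hU : RegularlyVarying (-η) U)
    (hα : α < η) (hβ : η < β) :
    ∃ δ, 0 < δ ∧ ∃ C, C ≠ ∞ ∧ ∀ (F : ℝ → ℝ≥0∞) u Z, 0 < u →
      (∀ s, 0 < s → brokenPow δ (-δ) (s / u) * (U s * F s) ≤ Z) →
      ∀ s, 0 < s → F s ≤ C * Z * (U u)⁻¹ * brokenPow α β (s / u) := by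
  set δ := min (η - α) (β - η) / 2
  have hδ : 0 < δ := half_pos (lt_min (sub_pos.2 hα) (sub_pos.2 hβ))
  have hδα : δ + δ ≤ η - α := (add_halves _).trans_le (min_le_left _ _)
  have hδβ : δ + δ ≤ β - η := (add_halves _).trans_le (min_le_right _ _)
  obtain ⟨C, hC, hgrowth⟩ := hU.inv.growth δ hδ
  rw [neg_neg] at hgrowth
  refine ⟨δ, hδ, C, hC, fun F u Z hu hZ s hs => ?_⟩
  have hsu := div_pos hs hu
  have hUs : U s ≠ 0 ∧ U s ≠ ∞ := ⟨hU.ne_zero s hs, hU.ne_top s hs⟩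
  calc F s = (U s)⁻¹ * (U s * F s) := (ENNReal.inv_mul_cancel_left hUs.1 hUs.2).symm
    _ = (U s)⁻¹ * (brokenPow (-δ) δ (s / u) * (brokenPow δ (-δ) (s / u) * (U s * F s))) := by
        rw [← mul_assoc (brokenPow _ _ _), brokenPow_mul hsu, neg_add_cancel, add_neg_cancel,
          brokenPow_self, ENNReal.rpow_zero, one_mul]
    _ ≤ C * brokenPow (η - δ) (η + δ) (s / u) * (U u)⁻¹ * (brokenPow (-δ) δ (s / u) * Z) := by
        gcongr
        exacts [hgrowth hs hu, hZ s hs]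
    _ = C * Z * (U u)⁻¹ * brokenPow (η - δ + -δ) (η + δ + δ) (s / u) := by
        rw [← brokenPow_mul hsu]
        ring
    _ ≤ C * Z * (U u)⁻¹ * brokenPow α β (s / u) := by
        gcongr
        exact brokenPow_mono (by linarith) (by linarith)

end ChangeOfVariables

section Interpolation

variable {N₀ N₁ N₀' N₁' : G → ℝ≥0∞} {U V W₀ W₁ : ℝ → ℝ≥0∞} {ρ : ℝ → ℝ}
  {α β α' β' γ η κ : ℝ} {r : ℝ≥0∞}

lemma IsIntermediate.exists_eLpNorm_mul_Kf_le (h₀ : IsQuasinorm N₀) (h₁ : IsQuasinorm N₁)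
    (hN₀ : IsIntermediate N₀ N₁ α β W₀ N₀') (hN₁ : IsIntermediate N₀ N₁ α' β' W₁ N₁')
    (hW : ∀ u, 0 < u → W₀ u = ENNReal.ofReal (ρ u) * W₁ u)
    (hρ : RegularlyVarying κ fun u => ENNReal.ofReal (ρ u)) (hκ : 0 < κ)
    (hV : RegularlyVarying γ V) (hU : RegularlyVarying η U)
    (hUV : ∀ u, 0 < u → U u = V (ρ u) * W₀ u) (r : ℝ≥0∞) :
    ∃ C, C ≠ ∞ ∧ ∀ f, eLpNorm (fun u => U u * Kf N₀ N₁ u f) r dlog ≤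
      C * eLpNorm (fun t => V t * Kf N₀' N₁' t f) r dlog := by
  obtain ⟨A, hA, hUgrowth⟩ := hU.growth 1 one_pos
  obtain ⟨B, hB, hVgrowth⟩ := hV.growth 1 one_pos
  obtain ⟨C, hC, hle⟩ := hN₀.exists_mul_Kf_le h₀ h₁ hN₁ hW
  obtain ⟨D, hD, hnorm⟩ := exists_eLpNorm_le_of_le_comp hκ hρ r
    (ENNReal.mul_ne_top hA one_ne_top) (ENNReal.mul_ne_top hB one_ne_top) hC
  refine ⟨D, hD, fun f => hnorm _ _ (hUgrowth.mul (powerGrowth_Kf N₀ N₁ f))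
    (hVgrowth.mul (powerGrowth_Kf N₀' N₁' f)) fun u hu => ?_⟩
  calc U u * Kf N₀ N₁ u f = V (ρ u) * (W₀ u * Kf N₀ N₁ u f) := by rw [hUV u hu, mul_assoc]
    _ ≤ V (ρ u) * (C * Kf N₀' N₁' (ρ u) f) := mul_le_mul_right (hle f u hu) _
    _ = C * (V (ρ u) * Kf N₀' N₁' (ρ u) f) := mul_left_comm _ _ _

lemma IsIntermediate.exists_mul_Kf_le_of_brokenPow_mul_le (h₀ : IsQuasinorm N₀)
    (h₁ : IsQuasinorm N₁)
    (hN₀ : IsIntermediate N₀ N₁ α 0 W₀ N₀') (hN₁ : IsIntermediate N₀ N₁ 1 β W₁ N₁')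
    (hW : ∀ u, 0 < u → W₀ u = ENNReal.ofReal (ρ u) * W₁ u) (hW₀ : ∀ u, 0 < u → W₀ u ≠ ∞)
    (hα : α ≤ 1) (hβ : 0 ≤ β) (hU : RegularlyVarying (-η) U) (hαη : α < η) (hηβ : η < β)
    (hUV : ∀ u, 0 < u → U u = V (ρ u) * W₀ u) :
    ∃ δ > 0, ∃ C, C ≠ ∞ ∧ ∀ f u Z, 0 < u →
      (∀ s, 0 < s → brokenPow δ (-δ) (s / u) * (U s * Kf N₀ N₁ s f) ≤ Z) →
      V (ρ u) * Kf N₀' N₁' (ρ u) f ≤ C * Z := by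
  obtain ⟨δ, hδ, A, hA, hpeak⟩ := hU.exists_le_mul_brokenPow hαη hηβ
  obtain ⟨B, hB, hle⟩ := hN₀.exists_Kf_le_of_le_brokenPow h₀ h₁ hN₁ hW hW₀ hα hβ
  refine ⟨δ, hδ, B * A + 1, by finiteness, fun f u Z hu hZ => ?_⟩
  rcases eq_or_ne Z ∞ with rfl | hZ'
  · simp
  have hUu : U u ≠ 0 ∧ U u ≠ ∞ := ⟨hU.ne_zero u hu, hU.ne_top u hu⟩
  calc V (ρ u) * Kf N₀' N₁' (ρ u) f
      ≤ V (ρ u) * (B * (A * Z * (U u)⁻¹) * W₀ u) := by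
        gcongr
        exact hle f u _ hu (by finiteness [hUu.1]) (hpeak _ u Z hu hZ)
    _ = B * A * Z * (U u * (U u)⁻¹) := by
        nth_rw 2 [hUV u hu]
        ring
    _ ≤ (B * A + 1) * Z := by
        rw [ENNReal.mul_inv_cancel hUu.1 hUu.2, mul_one]
        gcongr
        exact le_self_add

lemma IsIntermediate.exists_eLpNorm_mul_Kf_ge (h₀ : IsQuasinorm N₀) (h₁ : IsQuasinorm N₁)
    (hN₀ : IsIntermediate N₀ N₁ α 0 W₀ N₀') (hN₁ : IsIntermediate N₀ N₁ 1 β W₁ N₁')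
    (hW : ∀ u, 0 < u → W₀ u = ENNReal.ofReal (ρ u) * W₁ u) (hW₀ : ∀ u, 0 < u → W₀ u ≠ ∞)
    (hρ : RegularlyVarying κ fun u => ENNReal.ofReal (ρ u)) (hκ : 0 < κ)
    (hα : α ≤ 1) (hβ : 0 ≤ β) (hV : RegularlyVarying γ V) (hU : RegularlyVarying (-η) U)
    (hαη : α < η) (hηβ : η < β) (hUV : ∀ u, 0 < u → U u = V (ρ u) * W₀ u) (hr : r ≠ 0) :
    ∃ C, C ≠ ∞ ∧ ∀ f, eLpNorm (fun t => V t * Kf N₀' N₁' t f) r dlog ≤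
      C * eLpNorm (fun u => U u * Kf N₀ N₁ u f) r dlog := by
  obtain ⟨δ, hδ, C, hC, hle⟩ := hN₀.exists_mul_Kf_le_of_brokenPow_mul_le h₀ h₁ hN₁ hW hW₀ hα hβ hU
    hαη hηβ hUV
  obtain ⟨A, hA, hUgrowth⟩ := hU.growth 1 one_pos
  obtain ⟨B, hB, hVgrowth⟩ := hV.growth 1 one_pos
  obtain ⟨D, hD, hnorm⟩ := exists_eLpNorm_le_of_comp_le hκ hρ hr hδ
    (ENNReal.mul_ne_top hA one_ne_top) (ENNReal.mul_ne_top hB one_ne_top) hC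
  exact ⟨D, hD, fun f => hnorm _ _ (hUgrowth.mul (powerGrowth_Kf N₀ N₁ f))
    (hVgrowth.mul (powerGrowth_Kf N₀' N₁' f)) (hle f)⟩

end Interpolation

section Spaces

variable {N₀ N₁ N₀' N₁' : G → ℝ≥0∞} {W : ℝ → ℝ≥0∞} {a b c c₀ c₁ : ℝ → ℝ}
  {α β γ σ η θ₀ θ₁ θ t : ℝ} {q r : ℝ≥0∞}

lemma ofReal_rpow_sub_mul (ht : 0 < t) (γ p x : ℝ) :
    ENNReal.ofReal (t ^ (γ - p) * x) = ENNReal.ofReal (t ^ (-p)) * ENNReal.ofReal (t ^ γ * x) := by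
  rw [← ENNReal.ofReal_mul (by positivity), ← mul_assoc, ← Real.rpow_add ht, neg_add_eq_sub]

lemma normK_eq_eLpNorm (N₀ N₁ : G → ℝ≥0∞) (θ : ℝ) (hq : q ≠ 0) (b : ℝ → ℝ) (f : G) :
    normK N₀ N₁ θ q b f =
      eLpNorm (fun u => ENNReal.ofReal (u ^ (-θ) * b u) * Kf N₀ N₁ u f) q dlog := by
  rw [← dlog_restrict_Ioi]
  exact lqNorm_eq_eLpNorm hq measurableSet_Ioi subset_rfl fun u hu => by
    rw [ofReal_rpow_sub_mul hu, mul_assoc]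

lemma normR_eq_tailMixedNorm (N₀ N₁ : G → ℝ≥0∞) (σ : ℝ) (hr : r ≠ 0) (hq : q ≠ 0) (b a : ℝ → ℝ)
    (f : G) : normR N₀ N₁ σ r q b a f = tailMixedNorm r q (fun t => ENNReal.ofReal (b t / a t))
      fun u => ENNReal.ofReal (u ^ (-σ) * a u) * Kf N₀ N₁ u f := by
  rw [tailMixedNorm, ← dlog_restrict_Ioi]
  refine lqNorm_eq_eLpNorm hr measurableSet_Ioi subset_rfl fun t (ht : 0 < t) => ?_
  rw [ENNReal.ofReal_mul (by positivity), mul_assoc, tailNorm]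
  congr 2
  exact lqNorm_eq_eLpNorm hq measurableSet_Ioi (Ioi_subset_Ioi ht.le) fun u hu => by
    rw [ofReal_rpow_sub_mul (ht.trans hu), mul_assoc]

lemma normL_eq_headMixedNorm (N₀ N₁ : G → ℝ≥0∞) (σ : ℝ) (hr : r ≠ 0) (hq : q ≠ 0) (b a : ℝ → ℝ)
    (f : G) : normL N₀ N₁ σ r q b a f = headMixedNorm r q (fun t => ENNReal.ofReal (b t / a t))
      fun u => ENNReal.ofReal (u ^ (-σ) * a u) * Kf N₀ N₁ u f := by
  rw [headMixedNorm, ← dlog_restrict_Ioi]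
  refine lqNorm_eq_eLpNorm hr measurableSet_Ioi subset_rfl fun t (ht : 0 < t) => ?_
  rw [ENNReal.ofReal_mul (by positivity), mul_assoc, headNorm]
  congr 2
  exact lqNorm_eq_eLpNorm hq measurableSet_Ioo Ioo_subset_Ioi_self fun u hu => by
    rw [ofReal_rpow_sub_mul hu.1, mul_assoc]

lemma lqNorm_svWgt_Ioo (hr : r ≠ 0) (b : ℝ → ℝ) (t : ℝ) :
    LqNorm r (Ioo 0 t) (svWgt r b) = headNorm r (fun s => ENNReal.ofReal (b s)) t :=
  lqNorm_eq_eLpNorm hr measurableSet_Ioo Ioo_subset_Ioi_self fun u hu => by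
    rw [svWgt, ENNReal.ofReal_mul (Real.rpow_nonneg hu.1.le _)]

lemma lqNorm_svWgt_Ioi (hr : r ≠ 0) (b : ℝ → ℝ) (ht : 0 ≤ t) :
    LqNorm r (Ioi t) (svWgt r b) = tailNorm r (fun s => ENNReal.ofReal (b s)) t :=
  lqNorm_eq_eLpNorm hr measurableSet_Ioi (Ioi_subset_Ioi ht) fun u hu => by
    rw [svWgt, ENNReal.ofReal_mul (Real.rpow_nonneg (ht.trans hu.le) _)]

lemma RegularlyVarying.ofReal_rpow_mul (ha : RegularlyVarying 0 fun t => ENNReal.ofReal (a t))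
    (γ : ℝ) : RegularlyVarying γ fun t => ENNReal.ofReal (t ^ γ * a t) := by
  rw [← add_zero γ]
  refine ((regularlyVarying_rpow γ).mul ha).congr fun t ht => ?_
  rw [add_zero, ENNReal.ofReal_mul (by positivity), ENNReal.ofReal_rpow_of_pos ht]

lemma RegularlyVarying.ofReal_div (hb : RegularlyVarying η fun t => ENNReal.ofReal (b t))
    (ha : RegularlyVarying γ fun t => ENNReal.ofReal (a t)) :
    RegularlyVarying (η - γ) fun t => ENNReal.ofReal (b t / a t) :=
  (hb.mul ha.inv).congr fun t ht => by
    rw [ENNReal.ofReal_div_of_pos (ha.pos ht), div_eq_mul_inv]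

lemma RegularlyVarying.ofReal_mul_toReal (ha : RegularlyVarying η fun t => ENNReal.ofReal (a t))
    (hW : RegularlyVarying γ W) :
    RegularlyVarying (η + γ) fun t => ENNReal.ofReal (a t * (W t).toReal) :=
  (ha.mul hW).congr fun t ht => by
    rw [ENNReal.ofReal_mul (ha.pos ht).le, ENNReal.ofReal_toReal (hW.ne_top t ht)]

lemma regularlyVarying_headWeight (ha : RegularlyVarying 0 fun t => ENNReal.ofReal (a t))
    (hb : RegularlyVarying 0 fun t => ENNReal.ofReal (b t)) (hr : r ≠ 0)
    (hfin : LqNorm r (Ioo 0 1) (svWgt r fun s => b s / a s) ≠ ∞)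
    (hc : ∀ t, c t = a t * (LqNorm r (Ioo 0 t) (svWgt r fun s => b s / a s)).toReal) :
    RegularlyVarying 0 fun t => ENNReal.ofReal (c t) := by
  simp only [lqNorm_svWgt_Ioo hr] at hfin hc
  simpa [hc] using ha.ofReal_mul_toReal (regularlyVarying_headNorm (hb.ofReal_div ha) hr hfin)

lemma regularlyVarying_tailWeight (ha : RegularlyVarying 0 fun t => ENNReal.ofReal (a t))
    (hb : RegularlyVarying 0 fun t => ENNReal.ofReal (b t)) (hr : r ≠ 0)
    (hfin : LqNorm r (Ioi 1) (svWgt r fun s => b s / a s) ≠ ∞)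
    (hc : ∀ t, c t = a t * (LqNorm r (Ioi t) (svWgt r fun s => b s / a s)).toReal) :
    RegularlyVarying 0 fun t => ENNReal.ofReal (c t) := by
  rw [lqNorm_svWgt_Ioi hr _ zero_le_one] at hfin
  have h := ha.ofReal_mul_toReal (regularlyVarying_tailNorm (hb.ofReal_div ha) hr hfin)
  rw [sub_zero, add_zero] at h
  exact h.congr fun t ht => by rw [hc, lqNorm_svWgt_Ioi hr _ ht.le]

lemma IsIntermediate.congr {W' : ℝ → ℝ≥0∞} {N N' : G → ℝ≥0∞}
    (hN : IsIntermediate N₀ N₁ α β W N) (hW : ∀ u, 0 < u → W u = W' u) (hNN' : ∀ f, N f = N' f) :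
    IsIntermediate N₀ N₁ α β W' N' where
  lower := by
    obtain ⟨C, hC, h⟩ := hN.lower
    exact ⟨C, hC, fun f u hu => hW u hu ▸ hNN' f ▸ h f u hu⟩
  upper := by
    obtain ⟨C, hC, h⟩ := hN.upper
    exact ⟨C, hC, fun f u m hu hm hf => hW u hu ▸ hNN' f ▸ h f u m hu hm hf⟩

lemma isIntermediate_normR (ha : RegularlyVarying 0 fun t => ENNReal.ofReal (a t))
    (hb : RegularlyVarying 0 fun t => ENNReal.ofReal (b t)) (hr : r ≠ 0) (hq : q ≠ 0)
    (hfin : LqNorm r (Ioo 0 1) (svWgt r fun s => b s / a s) ≠ ∞)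
    (hc : ∀ t, c t = a t * (LqNorm r (Ioo 0 t) (svWgt r fun s => b s / a s)).toReal)
    (hβ : β < σ) (hα : σ < α) :
    IsIntermediate N₀ N₁ α β (fun u => ENNReal.ofReal (u ^ (-σ) * c u))
      (normR N₀ N₁ σ r q b a) := by
  have hw : RegularlyVarying 0 fun t => ENNReal.ofReal (b t / a t) := by
    simpa only [sub_zero] using hb.ofReal_div ha
  refine (isIntermediate_tailMixedNorm (ha.ofReal_rpow_mul (-σ)) hw hr hq hβ hα).congr
    (fun u hu => ?_) fun f => (normR_eq_tailMixedNorm N₀ N₁ σ hr hq b a f).symm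
  rw [lqNorm_svWgt_Ioo hr] at hfin
  have hhead := (regularlyVarying_headNorm hw hr hfin).ne_top u hu
  have hau := ha.pos hu
  rw [hc, lqNorm_svWgt_Ioo hr, ← mul_assoc, ENNReal.ofReal_mul (q := ENNReal.toReal _)
    (by positivity), ENNReal.ofReal_toReal hhead]

lemma isIntermediate_normL (ha : RegularlyVarying 0 fun t => ENNReal.ofReal (a t))
    (hb : RegularlyVarying 0 fun t => ENNReal.ofReal (b t)) (hr : r ≠ 0) (hq : q ≠ 0)
    (hfin : LqNorm r (Ioi 1) (svWgt r fun s => b s / a s) ≠ ∞)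
    (hc : ∀ t, c t = a t * (LqNorm r (Ioi t) (svWgt r fun s => b s / a s)).toReal)
    (hβ : β < σ) (hα : σ < α) :
    IsIntermediate N₀ N₁ α β (fun u => ENNReal.ofReal (u ^ (-σ) * c u))
      (normL N₀ N₁ σ r q b a) := by
  have hw : RegularlyVarying 0 fun t => ENNReal.ofReal (b t / a t) := by
    simpa only [sub_zero] using hb.ofReal_div ha
  refine (isIntermediate_headMixedNorm (ha.ofReal_rpow_mul (-σ)) hw hr hq hβ hα).congr
    (fun u hu => ?_) fun f => (normL_eq_headMixedNorm N₀ N₁ σ hr hq b a f).symm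
  rw [lqNorm_svWgt_Ioi hr _ zero_le_one] at hfin
  have htail := (regularlyVarying_tailNorm hw hr hfin).ne_top u hu
  have hau := ha.pos hu
  rw [hc, lqNorm_svWgt_Ioi hr _ hu.le, ← mul_assoc, ENNReal.ofReal_mul (q := ENNReal.toReal _)
    (by positivity), ENNReal.ofReal_toReal htail]

lemma equivNorms_of_le {E : Type*} {nX nY : E → ℝ≥0∞} (hXY : ∃ C, C ≠ ∞ ∧ ∀ f, nX f ≤ C * nY f)
    (hYX : ∃ C, C ≠ ∞ ∧ ∀ f, nY f ≤ C * nX f) : EquivNorms nX nY := by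
  obtain ⟨C, hC, hXY⟩ := hXY
  obtain ⟨D, hD, hYX⟩ := hYX
  refine ⟨C + D + 1, by simp, by finiteness, fun f => ⟨?_, ?_⟩⟩
  · rw [ENNReal.inv_mul_le_iff (by simp) (by finiteness)]
    exact (hYX f).trans (by gcongr; exact le_add_right le_add_self)
  · exact (hXY f).trans (by gcongr; exact le_add_right le_self_add)

lemma rpow_mul_eq_ratio_mul {s x y : ℝ} (hs : 0 < s) (hy : y ≠ 0) :
    s ^ (-θ₀) * x = s ^ (θ₁ - θ₀) * (x / y) * (s ^ (-θ₁) * y) := by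
  rw [mul_mul_mul_comm, ← Real.rpow_add hs, div_mul_cancel₀ x hy]
  ring_nf

lemma rpow_mul_weight_eq {s x y : ℝ} (hs : 0 < s) (hx : 0 < x) (hy : 0 < y) (v : ℝ) :
    s ^ (-((1 - θ) * θ₀ + θ * θ₁)) * (x ^ (1 - θ) * y ^ θ * v) =
      (s ^ (θ₁ - θ₀) * (x / y)) ^ (-θ) * v * (s ^ (-θ₀) * x) := by
  have hpow_s : s ^ (-((1 - θ) * θ₀ + θ * θ₁)) = s ^ ((θ₁ - θ₀) * -θ) * s ^ (-θ₀) := by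
    rw [← Real.rpow_add hs]
    ring_nf
  have hpow_x : x ^ (1 - θ) = x ^ (-θ) * x := by
    rw [sub_eq_neg_add, Real.rpow_add hx, Real.rpow_one]
  rw [Real.mul_rpow (by positivity) (by positivity), ← Real.rpow_mul hs.le,
    Real.div_rpow hx.le hy.le, Real.rpow_neg hy.le, div_inv_eq_mul, hpow_s, hpow_x]
  ring

lemma RegularlyVarying.ofReal_interpolatedWeight {ρ : ℝ → ℝ}
    (hc₀ : RegularlyVarying 0 fun t => ENNReal.ofReal (c₀ t))
    (hc₁ : RegularlyVarying 0 fun t => ENNReal.ofReal (c₁ t))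
    (ha : RegularlyVarying 0 fun t => ENNReal.ofReal (a t))
    (hρ : RegularlyVarying γ fun t => ENNReal.ofReal (ρ t)) (hθ : 0 < θ) (hθ' : θ < 1) :
    RegularlyVarying 0 fun t => ENNReal.ofReal (c₀ t ^ (1 - θ) * c₁ t ^ θ * a (ρ t)) := by
  have h := ((hc₀.rpow (sub_pos.2 hθ')).mul (hc₁.rpow hθ)).mul (ha.comp hρ)
  rw [zero_mul, zero_mul, add_zero, add_zero] at h
  refine h.congr fun t ht => ?_
  have hc₀t := hc₀.pos ht
  have hc₁t := hc₁.pos ht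
  rw [ENNReal.ofReal_mul (by positivity), ENNReal.ofReal_mul (by positivity),
    ENNReal.ofReal_rpow_of_pos hc₀t, ENNReal.ofReal_rpow_of_pos hc₁t]

lemma IsIntermediate.equivNorms_normK (h₀ : IsQuasinorm N₀) (h₁ : IsQuasinorm N₁)
    (hc₀ : RegularlyVarying 0 fun t => ENNReal.ofReal (c₀ t))
    (hc₁ : RegularlyVarying 0 fun t => ENNReal.ofReal (c₁ t))
    (hN₀ : IsIntermediate N₀ N₁ α 0 (fun u => ENNReal.ofReal (u ^ (-θ₀) * c₀ u)) N₀')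
    (hN₁ : IsIntermediate N₀ N₁ 1 β (fun u => ENNReal.ofReal (u ^ (-θ₁) * c₁ u)) N₁')
    (hα : α ≤ 1) (hβ : 0 ≤ β) (hθ₀₁ : θ₀ < θ₁) (hθ : 0 < θ) (hθ' : θ < 1)
    (hη : (1 - θ) * θ₀ + θ * θ₁ = η) (hαη : α < η) (hηβ : η < β) (hr : r ≠ 0)
    (ha : RegularlyVarying 0 fun t => ENNReal.ofReal (a t)) {ρ : ℝ → ℝ}
    (hρ : ∀ t, ρ t = t ^ (θ₁ - θ₀) * (c₀ t / c₁ t)) :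
    EquivNorms (normK N₀' N₁' θ r a)
      (normK N₀ N₁ η r fun t => c₀ t ^ (1 - θ) * c₁ t ^ θ * a (ρ t)) := by
  have hρvar : RegularlyVarying (θ₁ - θ₀) fun u => ENNReal.ofReal (ρ u) := by
    have hdiv := hc₀.ofReal_div hc₁
    rw [sub_zero] at hdiv
    simpa only [hρ] using hdiv.ofReal_rpow_mul (θ₁ - θ₀)
  have hW : ∀ u, 0 < u → ENNReal.ofReal (u ^ (-θ₀) * c₀ u) =
      ENNReal.ofReal (ρ u) * ENNReal.ofReal (u ^ (-θ₁) * c₁ u) := fun u hu => by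
    rw [← ENNReal.ofReal_mul (hρvar.pos hu).le, hρ, ← rpow_mul_eq_ratio_mul hu (hc₁.pos hu).ne']
  have hU := (hc₀.ofReal_interpolatedWeight hc₁ ha hρvar hθ hθ').ofReal_rpow_mul (-η)
  have hUV : ∀ u, 0 < u → ENNReal.ofReal (u ^ (-η) * (c₀ u ^ (1 - θ) * c₁ u ^ θ * a (ρ u))) =
      ENNReal.ofReal (ρ u ^ (-θ) * a (ρ u)) * ENNReal.ofReal (u ^ (-θ₀) * c₀ u) := fun u hu => by
    have hρu := hρvar.pos hu
    have hau := ha.pos hρu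
    rw [← ENNReal.ofReal_mul (by positivity), ← hη,
      rpow_mul_weight_eq hu (hc₀.pos hu) (hc₁.pos hu), ← hρ]
  have hV := ha.ofReal_rpow_mul (-θ)
  refine equivNorms_of_le ?_ ?_ <;> simp only [normK_eq_eLpNorm _ _ _ hr]
  · exact hN₀.exists_eLpNorm_mul_Kf_ge h₀ h₁ hN₁ hW (fun _ _ => ofReal_ne_top) hρvar
      (sub_pos.2 hθ₀₁) hα hβ hV hU hαη hηβ hUV hr
  · exact hN₀.exists_eLpNorm_mul_Kf_le h₀ h₁ hN₁ hW hρvar (sub_pos.2 hθ₀₁) hV hU hUV r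

end Spaces

section SlowVariation

lemma EquivOn.exists_le_mul {S : Set ℝ} {f g : ℝ → ℝ} (h : EquivOn S f g) :
    ∃ C, ∀ s ∈ S, ∀ u ∈ S, g s ≤ g u → f s ≤ C * f u := by
  obtain ⟨C, hC, h⟩ := h
  refine ⟨C * C, fun s hs u hu hsu => ?_⟩
  calc f s ≤ C * g s := (h s hs).2
    _ ≤ C * (C * f u) := by
        gcongr
        exact hsu.trans ((inv_mul_le_iff₀ hC).1 (h u hu).1)
    _ = C * C * f u := (mul_assoc _ _ _).symm

lemma ofReal_le_of_rpow_mul_le {C γ s u x y : ℝ} (hs : 0 < s) (hu : 0 < u) (hy : 0 ≤ y)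
    (h : s ^ γ * x ≤ C * (u ^ γ * y)) :
    ENNReal.ofReal x ≤ ENNReal.ofReal C * ENNReal.ofReal (s / u) ^ (-γ) * ENNReal.ofReal y := by
  have hsu : 0 < (s / u) ^ (-γ) := by positivity
  rw [ENNReal.ofReal_rpow_of_pos (div_pos hs hu), ← ENNReal.ofReal_mul' hsu.le,
    ← ENNReal.ofReal_mul' hy]
  refine ENNReal.ofReal_le_ofReal ?_
  calc x = s ^ (-γ) * (s ^ γ * x) := by
        rw [Real.rpow_neg hs.le, inv_mul_cancel_left₀ (by positivity)]
    _ ≤ s ^ (-γ) * (C * (u ^ γ * y)) := by gcongr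
    _ = C * (s / u) ^ (-γ) * y := by
        rw [Real.div_rpow hs.le hu.le, Real.rpow_neg hu.le, div_inv_eq_mul]
        ring

lemma SlowlyVarying.regularlyVarying {b : ℝ → ℝ} (hb : SlowlyVarying b) :
    RegularlyVarying 0 fun t => ENNReal.ofReal (b t) := by
  obtain ⟨-, hpos, hb⟩ := hb
  refine ⟨fun t ht => by simpa using hpos t ht, fun t _ => ofReal_ne_top, fun ε hε => ?_⟩
  obtain ⟨⟨g, hg, hgb⟩, ⟨k, hk, hkb⟩⟩ := hb ε hε
  obtain ⟨C, hC⟩ := hgb.exists_le_mul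
  obtain ⟨D, hD⟩ := hkb.exists_le_mul
  refine ⟨ENNReal.ofReal C + ENNReal.ofReal D, by finiteness, fun s u hs hu => ?_⟩
  rw [zero_sub, zero_add]
  rcases le_total s u with hsu | hus
  · rw [brokenPow_of_le ((div_le_one hu).2 hsu)]
    refine (ofReal_le_of_rpow_mul_le hs hu (hpos u hu).le
      (hC s hs u hu (hg hs hu hsu))).trans ?_
    gcongr
    exact le_self_add
  · rw [brokenPow_of_ge ((one_le_div hu).2 hus)]
    refine (ofReal_le_of_rpow_mul_le hs hu (hpos u hu).le
      (hD s hs u hu (hk hu hs hus))).trans ?_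
    rw [neg_neg]
    gcongr
    exact le_add_self

lemma QuasiBanach.isQuasinorm {E : Type*} [AddCommGroup E] [Module ℝ E] (A : QuasiBanach E) :
    IsQuasinorm A.N where
  map_zero := A.zero
  map_neg f := by simpa using A.smul (-1) f
  add_le := by
    obtain ⟨C, -, hC, h⟩ := A.quasi
    exact ⟨C, hC, h⟩

end SlowVariation

theorem theorem28_general {N₀ N₁ : G → ℝ≥0∞} (h₀ : IsQuasinorm N₀) (h₁ : IsQuasinorm N₁)
    {θ₀ θ₁ θ : ℝ} (hθ₀ : 0 < θ₀) (hθ₀₁ : θ₀ < θ₁) (hθ₁ : θ₁ < 1) (hθ : 0 < θ) (hθ' : θ < 1)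
    {r r₀ r₁ q₀ q₁ : ℝ≥0∞} (hr : r ≠ 0) (hr₀ : r₀ ≠ 0) (hr₁ : r₁ ≠ 0) (hq₀ : q₀ ≠ 0)
    (hq₁ : q₁ ≠ 0) {a a₀ a₁ b₀ b₁ : ℝ → ℝ}
    (ha : RegularlyVarying 0 fun t => ENNReal.ofReal (a t))
    (ha₀ : RegularlyVarying 0 fun t => ENNReal.ofReal (a₀ t))
    (ha₁ : RegularlyVarying 0 fun t => ENNReal.ofReal (a₁ t))
    (hb₀ : RegularlyVarying 0 fun t => ENNReal.ofReal (b₀ t))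
    (hb₁ : RegularlyVarying 0 fun t => ENNReal.ofReal (b₁ t))
    (hfin₀ : LqNorm r₀ (Ioo 0 1) (svWgt r₀ fun s => b₀ s / a₀ s) ≠ ∞)
    (hfin₁ : LqNorm r₁ (Ioi 1) (svWgt r₁ fun s => b₁ s / a₁ s) ≠ ∞)
    {c₀ c₁ ρ : ℝ → ℝ}
    (hc₀ : ∀ t, c₀ t = a₀ t * (LqNorm r₀ (Ioo 0 t) (svWgt r₀ fun s => b₀ s / a₀ s)).toReal)
    (hc₁ : ∀ t, c₁ t = a₁ t * (LqNorm r₁ (Ioi t) (svWgt r₁ fun s => b₁ s / a₁ s)).toReal)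
    (hρ : ∀ t, ρ t = t ^ (θ₁ - θ₀) * (c₀ t / c₁ t)) :
    EquivNorms (normK (normR N₀ N₁ θ₀ r₀ q₀ b₀ a₀) (normL N₀ N₁ θ₁ r₁ q₁ b₁ a₁) θ r a)
      (normK N₀ N₁ ((1 - θ) * θ₀ + θ * θ₁) r
        fun t => c₀ t ^ (1 - θ) * c₁ t ^ θ * a (ρ t)) := by
  obtain ⟨τ₀, hτ₀, hτ₀'⟩ : ∃ τ₀, θ₀ < τ₀ ∧ τ₀ < (1 - θ) * θ₀ + θ * θ₁ :=
    exists_between (by nlinarith)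
  obtain ⟨τ₁, hτ₁, hτ₁'⟩ : ∃ τ₁, (1 - θ) * θ₀ + θ * θ₁ < τ₁ ∧ τ₁ < θ₁ :=
    exists_between (by nlinarith)
  have hR := isIntermediate_normR (N₀ := N₀) (N₁ := N₁) ha₀ hb₀ hr₀ hq₀ hfin₀ hc₀ hθ₀ hτ₀
  have hL := isIntermediate_normL (N₀ := N₀) (N₁ := N₁) ha₁ hb₁ hr₁ hq₁ hfin₁ hc₁ hτ₁' hθ₁
  exact hR.equivNorms_normK h₀ h₁ (regularlyVarying_headWeight ha₀ hb₀ hr₀ hfin₀ hc₀)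
    (regularlyVarying_tailWeight ha₁ hb₁ hr₁ hfin₁ hc₁) hL (by linarith) (by linarith) hθ₀₁ hθ hθ'
    rfl hτ₀' hτ₁ hr ha hρ

theorem theorem28
    (A₀ A₁ : QuasiBanach E)
    (hne : ∃ x : E, x ≠ 0 ∧ A₀.N x ≠ ∞ ∧ A₁.N x ≠ ∞)
    (θ₀ θ₁ θ : ℝ) (hθ₀ : 0 < θ₀) (hθ₀₁ : θ₀ < θ₁) (hθ₁ : θ₁ < 1) (hθ : 0 < θ) (hθ' : θ < 1)
    (r r₀ r₁ q₀ q₁ : ℝ≥0∞) (hr : 0 < r) (hr₀ : 0 < r₀) (hr₁ : 0 < r₁) (hq₀ : 0 < q₀) (hq₁ : 0 < q₁)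
    (a a₀ a₁ b₀ b₁ : ℝ → ℝ)
    (h_sv_a : SlowlyVarying a)
    (h_sv_a₀ : SlowlyVarying a₀)
    (h_sv_a₁ : SlowlyVarying a₁)
    (h_sv_b₀ : SlowlyVarying b₀)
    (h_sv_b₁ : SlowlyVarying b₁)
    (hfin₀ : LqNorm r₀ (Ioo 0 1) (svWgt r₀ (fun s => b₀ s / a₀ s)) ≠ ∞)
    (hfin₁ : LqNorm r₁ (Ioi 1) (svWgt r₁ (fun s => b₁ s / a₁ s)) ≠ ∞)
    (c₀ c₁ ρ : ℝ → ℝ)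
    (hc₀ : ∀ t, c₀ t = a₀ t * (LqNorm r₀ (Ioo 0 t) (svWgt r₀ (fun s => b₀ s / a₀ s))).toReal)
    (hc₁ : ∀ t, c₁ t = a₁ t * (LqNorm r₁ (Ioi t) (svWgt r₁ (fun s => b₁ s / a₁ s))).toReal)
    (hρ : ∀ t, ρ t = t ^ (θ₁ - θ₀) * (c₀ t / c₁ t)) :
    EquivNorms
      (normK (normR A₀.N A₁.N θ₀ r₀ q₀ b₀ a₀) (normL A₀.N A₁.N θ₁ r₁ q₁ b₁ a₁) θ r a)
      (normK A₀.N A₁.N ((1 - θ) * θ₀ + θ * θ₁) r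
        (fun t => c₀ t ^ (1 - θ) * c₁ t ^ θ * a (ρ t))) :=
  theorem28_general A₀.isQuasinorm A₁.isQuasinorm hθ₀ hθ₀₁ hθ₁ hθ hθ' hr.ne' hr₀.ne' hr₁.ne' hq₀.ne'
    hq₁.ne' h_sv_a.regularlyVarying h_sv_a₀.regularlyVarying h_sv_a₁.regularlyVarying
    h_sv_b₀.regularlyVarying h_sv_b₁.regularlyVarying hfin₀ hfin₁ hc₀ hc₁ hρ

end
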